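/- Assume 0 ≤ α < N, p, q > 0, ρ > 0, and that the Dirichlet eigenpair hypothesis holds for (Ω, λ₁, φ). If μ ≤ C_{H,Ω} and (p + q − 1)·|γ_*| < N − α + 2 (equivalently, p + q < 1 + (N−α+2)/|γ_*| when γ_* < 0), then the inequality (E): −Δu − μ|x|^{−2}u ≥ (|x|^{−α} * u^p) u^q has no positive solution in C_Ω^ρ. -/

import Mathlib

open MeasureTheory Real Set
open scoped ENNReal NNReal

noncomputable section

/-- Euclidean space `ℝ^N`. -/
abbrev Euc (N : ℕ) := EuclideanSpace ℝ (Fin N)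

/-- The Euclidean Laplacian `Δu(x) = ∑ ∂²u/∂xᵢ²(x)`, the trace of the Hessian. -/
def lap (N : ℕ) (u : Euc N → ℝ) (x : Euc N) : ℝ :=
  ∑ i : Fin N,
    iteratedFDeriv ℝ 2 u x ![EuclideanSpace.single i 1, EuclideanSpace.single i 1]

/-- The open cone `C_Ω^ρ = {x : |x| > ρ, x/|x| ∈ Ω}`. -/
def coneGT (N : ℕ) (ρ : ℝ) (Ω : Set (Euc N)) : Set (Euc N) :=
  {x | ρ < ‖x‖ ∧ ‖x‖⁻¹ • x ∈ Ω}

/-- The full open cone `C_Ω = {x ≠ 0 : x/|x| ∈ Ω}`. -/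
def cone (N : ℕ) (Ω : Set (Euc N)) : Set (Euc N) :=
  {x | x ≠ 0 ∧ ‖x‖⁻¹ • x ∈ Ω}

/-- `Ω` is a nonempty, connected, relatively open subset of the unit sphere `S^{N-1}`. -/
def IsConeDomain (N : ℕ) (Ω : Set (Euc N)) : Prop :=
  Ω ⊆ Metric.sphere (0 : Euc N) 1 ∧ IsConnected Ω ∧
    IsOpen {ω : Metric.sphere (0 : Euc N) 1 | (ω : Euc N) ∈ Ω}

/-- The convolution `(|x|^{-α} * f)(x) = ∫_{C_Ω^ρ} f(y)|x-y|^{-α} dy`, valued in `[0,∞]`. -/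
def rieszConv (N : ℕ) (α ρ : ℝ) (Ω : Set (Euc N)) (f : Euc N → ℝ) (x : Euc N) : ℝ≥0∞ :=
  ∫⁻ y in coneGT N ρ Ω, ENNReal.ofReal (f y * ‖x - y‖ ^ (-α))

/-- Dirichlet eigenpair hypothesis for `(Ω, λ₁, φ)`: `φ` is continuous on the closure of `Ω`,
positive on `Ω`, vanishing on the relative boundary, with maximum `1`, and its 0-homogeneous
extension `Φ(x) = φ(x/|x|)` is `C²` on the open cone and satisfies `ΔΦ = -λ₁|x|⁻²Φ`. -/
structure DirichletEigenpair (N : ℕ) (Ω : Set (Euc N)) (lam1 : ℝ) (φ : Euc N → ℝ) : Prop where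
  contOn : ContinuousOn φ (closure Ω)
  pos : ∀ ω ∈ Ω, 0 < φ ω
  bdryZero : ∀ ω ∈ closure Ω \ Ω, φ ω = 0
  le_one : ∀ ω ∈ closure Ω, φ ω ≤ 1
  max_one : ∃ ω ∈ closure Ω, φ ω = 1
  smoothExt : ContDiffOn ℝ 2 (fun x => φ (‖x‖⁻¹ • x)) (cone N Ω)
  eigen : ∀ x ∈ cone N Ω,
    lap N (fun y => φ (‖y‖⁻¹ • y)) x = -lam1 * ‖x‖ ^ (-(2:ℝ)) * φ (‖x‖⁻¹ • x)

/-- The Hardy constant `C_{H,Ω} = λ₁ + ((N-2)/2)²`. -/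
def CHconst (N : ℕ) (lam1 : ℝ) : ℝ := lam1 + (((N : ℝ) - 2) / 2) ^ 2

/-- The smaller root `γ_*` of `γ(γ + N - 2) = λ₁ - μ`. -/
def gammaStar (N : ℕ) (lam1 μ : ℝ) : ℝ :=
  (-((N : ℝ) - 2) - Real.sqrt (((N : ℝ) - 2) ^ 2 + 4 * (lam1 - μ))) / 2

/-- A positive (classical) solution of `(E) : -Δu - μ|x|⁻²u ≥ (|x|^{-α} * uᵖ) u^q` in `C_Ω^ρ`. -/
def IsPosSolE (N : ℕ) (ρ μ α p q : ℝ) (Ω : Set (Euc N)) (u : Euc N → ℝ) : Prop :=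
  ContDiffOn ℝ 2 u (coneGT N ρ Ω) ∧
  ContinuousOn u (closure (coneGT N ρ Ω)) ∧
  (∀ x ∈ coneGT N ρ Ω, 0 < u x) ∧
  (∀ x ∈ coneGT N ρ Ω, rieszConv N α ρ Ω (fun y => u y ^ p) x < ⊤) ∧
  (∀ x ∈ coneGT N ρ Ω,
    (rieszConv N α ρ Ω (fun y => u y ^ p) x).toReal * u x ^ q ≤
      -lap N u x - μ * ‖x‖ ^ (-(2:ℝ)) * u x)

/-- A positive solution of `(Z) : -Δu - μ|x|⁻²u ≥ (∫_{C_Ω^ρ} uᵖ) u^q` in `C_Ω^ρ`. -/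
def IsPosSolZ (N : ℕ) (ρ μ p q : ℝ) (Ω : Set (Euc N)) (u : Euc N → ℝ) : Prop :=
  ContDiffOn ℝ 2 u (coneGT N ρ Ω) ∧
  ContinuousOn u (closure (coneGT N ρ Ω)) ∧
  (∀ x ∈ coneGT N ρ Ω, 0 < u x) ∧
  (∫⁻ y in coneGT N ρ Ω, ENNReal.ofReal (u y ^ p)) < ⊤ ∧
  (∀ x ∈ coneGT N ρ Ω,
    (∫⁻ y in coneGT N ρ Ω, ENNReal.ofReal (u y ^ p)).toReal * u x ^ q ≤
      -lap N u x - μ * ‖x‖ ^ (-(2:ℝ)) * u x)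

/-- A positive solution `(u, v)` of the system `(S)` in `C_Ω^ρ`. -/
def IsPosSolS (N : ℕ) (ρ μ α p q s : ℝ) (Ω : Set (Euc N)) (u v : Euc N → ℝ) : Prop :=
  ContDiffOn ℝ 2 u (coneGT N ρ Ω) ∧ ContinuousOn u (closure (coneGT N ρ Ω)) ∧
  ContDiffOn ℝ 2 v (coneGT N ρ Ω) ∧ ContinuousOn v (closure (coneGT N ρ Ω)) ∧
  (∀ x ∈ coneGT N ρ Ω, 0 < u x) ∧ (∀ x ∈ coneGT N ρ Ω, 0 < v x) ∧
  (∀ x ∈ coneGT N ρ Ω, rieszConv N α ρ Ω (fun y => v y ^ p) x < ⊤) ∧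
  (∀ x ∈ coneGT N ρ Ω,
    (rieszConv N α ρ Ω (fun y => v y ^ p) x).toReal * v x ^ q ≤
      -lap N u x - μ * ‖x‖ ^ (-(2:ℝ)) * u x) ∧
  (∀ x ∈ coneGT N ρ Ω, u x ^ s ≤ -lap N v x - μ * ‖x‖ ^ (-(2:ℝ)) * v x)


/-! ### Basic calculus -/

/-- Partial derivative. -/
def pd {N : ℕ} (i : Fin N) (g : Euc N → ℝ) (x : Euc N) : ℝ :=
  fderiv ℝ g x (EuclideanSpace.single i 1)

lemma fderiv_eq_sum_pd {N : ℕ} (g : Euc N → ℝ) (x v : Euc N) :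
    fderiv ℝ g x v = ∑ i, v i * pd i g x := by
  have h : v = ∑ i, v i • (EuclideanSpace.single i (1 : ℝ) : Euc N) := by
    have := (EuclideanSpace.basisFun (Fin N) ℝ).sum_repr v
    simpa using this.symm
  conv_lhs => rw [h]
  simp [map_sum, pd]

lemma lap_eq_sum_pd {N : ℕ} {u : Euc N → ℝ} {x : Euc N} (h : DifferentiableAt ℝ (fderiv ℝ u) x) :
    lap N u x = ∑ i, pd i (pd i u) x := by
  unfold lap
  refine Finset.sum_congr rfl fun i _ => ?_
  rw [iteratedFDeriv_two_apply]
  simp only [Matrix.cons_val_zero, Matrix.cons_val_one]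
  have : pd i u = fun y => (fderiv ℝ u y) (EuclideanSpace.single i 1) := rfl
  rw [pd, this, fderiv_clm_apply h (differentiableAt_const _)]
  simp

lemma pd_congr {N : ℕ} {g g' : Euc N → ℝ} {x : Euc N} (i : Fin N) (h : g =ᶠ[nhds x] g') :
    pd i g x = pd i g' x := by
  simp [pd, h.fderiv_eq]

lemma contDiffOn_pd {N : ℕ} {n m : WithTop ℕ∞} {U : Set (Euc N)} (hU : IsOpen U)
    {g : Euc N → ℝ} (hg : ContDiffOn ℝ n g U) (hmn : m + 1 ≤ n) (i : Fin N) :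
    ContDiffOn ℝ m (pd i g) U :=
  (hg.fderiv_of_isOpen hU hmn).clm_apply contDiffOn_const

lemma contDiffOn_euler {N : ℕ} {n m : WithTop ℕ∞} {U : Set (Euc N)} (hU : IsOpen U)
    {g : Euc N → ℝ} (hg : ContDiffOn ℝ n g U) (hmn : m + 1 ≤ n) :
    ContDiffOn ℝ m (fun x => fderiv ℝ g x x) U :=
  (hg.fderiv_of_isOpen hU hmn).clm_apply contDiffOn_id

lemma integrable_of_compact {N : ℕ} {S : Set (Euc N)} (hS : IsCompact S) {g : Euc N → ℝ}
    (hg : ContinuousOn g S) (h0 : ∀ x ∉ S, g x = 0) : Integrable g := by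
  refine (integrableOn_iff_integrable_of_support_subset ?_).1 (hg.integrableOn_compact hS)
  intro x hx
  by_contra h
  exact hx (h0 x h)

lemma contDiff_of_supp {N : ℕ} {U S : Set (Euc N)} (hU : IsOpen U) (hS : IsCompact S)
    (hSU : S ⊆ U) {V : Euc N → ℝ} (hV : ContDiffOn ℝ 1 V U) (h0 : ∀ x ∉ S, V x = 0) :
    ContDiff ℝ 1 V := by
  rw [contDiff_iff_contDiffAt]
  intro x
  by_cases hx : x ∈ U
  · exact hV.contDiffAt (hU.mem_nhds hx)
  · have hx' : x ∈ Sᶜ := fun h => hx (hSU h)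
    have : V =ᶠ[nhds x] fun _ => 0 := by
      filter_upwards [hS.isClosed.isOpen_compl.mem_nhds hx'] with y hy using h0 y hy
    exact contDiffAt_const.congr_of_eventuallyEq this

lemma pd_eq_zero_of_supp {N : ℕ} {S : Set (Euc N)} (hS : IsCompact S)
    {V : Euc N → ℝ} (h0 : ∀ x ∉ S, V x = 0) (i : Fin N) (x : Euc N) (hx : x ∉ S) :
    pd i V x = 0 := by
  have : V =ᶠ[nhds x] fun _ => 0 := by
    filter_upwards [hS.isClosed.isOpen_compl.mem_nhds hx] with y hy using h0 y hy
  rw [pd_congr i this]; simp [pd]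

lemma integral_pd {N : ℕ} {U S : Set (Euc N)} (hU : IsOpen U) (hS : IsCompact S)
    (hSU : S ⊆ U) {V : Euc N → ℝ} (hV : ContDiffOn ℝ 1 V U) (h0 : ∀ x ∉ S, V x = 0)
    (i : Fin N) : Integrable (pd i V) ∧ ∫ x, pd i V x = 0 := by
  have hc := contDiff_of_supp hU hS hSU hV h0
  have hd : Differentiable ℝ V := hc.differentiable (by simp)
  have hcont : Continuous (pd i V) := (hc.continuous_fderiv (by simp)).clm_apply continuous_const
  have hint : Integrable (pd i V) :=
    integrable_of_compact hS hcont.continuousOn (pd_eq_zero_of_supp hS h0 i)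
  refine ⟨hint, ?_⟩
  have h := integral_mul_fderiv_eq_neg_fderiv_mul_of_integrable (μ := (volume : Measure (Euc N)))
    (f := fun _ : Euc N => (1:ℝ)) (g := V) (v := EuclideanSpace.single i 1) (by simp)
    (by simp only [one_mul]; exact hint)
    (by simpa using integrable_of_compact hS hc.continuous.continuousOn h0)
    (fun x _ => differentiableAt_const _) (fun x _ => hd x)
  simpa [pd] using h

lemma pd_mul {N : ℕ} {a b : Euc N → ℝ} {x : Euc N} (ha : DifferentiableAt ℝ a x)
    (hb : DifferentiableAt ℝ b x) (i : Fin N) :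
    pd i (fun y => a y * b y) x = pd i a x * b x + a x * pd i b x := by
  simp [pd, fderiv_fun_mul ha hb]; ring

lemma pd_sub {N : ℕ} {a b : Euc N → ℝ} {x : Euc N} (ha : DifferentiableAt ℝ a x)
    (hb : DifferentiableAt ℝ b x) (i : Fin N) :
    pd i (fun y => a y - b y) x = pd i a x - pd i b x := by
  simp [pd, fderiv_fun_sub ha hb]

lemma pd_comp {N : ℕ} {a : Euc N → ℝ} {f : ℝ → ℝ} {f' : ℝ} {x : Euc N}
    (ha : DifferentiableAt ℝ a x) (hf : HasDerivAt f f' (a x)) (i : Fin N) :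
    pd i (fun y => f (a y)) x = f' * pd i a x := by
  have := hf.comp_hasFDerivAt x ha.hasFDerivAt
  have h2 : fderiv ℝ (fun y => f (a y)) x = f' • fderiv ℝ a x := this.fderiv
  simp [pd, h2]

lemma pd_coord {N : ℕ} (x : Euc N) (i : Fin N) : pd i (fun y : Euc N => y i) x = 1 := by
  have : (fun y : Euc N => y i) = (EuclideanSpace.proj i : Euc N →L[ℝ] ℝ) := by
    ext y; simp
  rw [pd, this, ContinuousLinearMap.fderiv]; simp

lemma pd_normSq {N : ℕ} (x : Euc N) (i : Fin N) :
    pd i (fun y : Euc N => ‖y‖ ^ 2) x = 2 * x i := by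
  have := (hasStrictFDerivAt_norm_sq x).hasFDerivAt.fderiv
  rw [pd, this]
  simp [EuclideanSpace.inner_single_right]

lemma diff_coord {N : ℕ} (i : Fin N) : ContDiff ℝ 2 (fun y : Euc N => y i) :=
  (EuclideanSpace.proj i : Euc N →L[ℝ] ℝ).contDiff

lemma diff_normSq {N : ℕ} : ContDiff ℝ 2 (fun y : Euc N => ‖y‖ ^ 2) := contDiff_norm_sq ℝ

lemma normSq_eq {N : ℕ} (x : Euc N) : ‖x‖ ^ 2 = ∑ i, x i * x i := by
  rw [EuclideanSpace.norm_sq_eq]; simp [sq]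

/-! ### The static inequality -/

lemma static_pointwise {N : ℕ} {U : Set (Euc N)} (hU : IsOpen U) (h0U : (0 : Euc N) ∉ U)
    {Φ l : Euc N → ℝ} {w f g h : ℝ → ℝ} {lam μ : ℝ} (P : Euc N → ℝ)
    (hΦ : ContDiffOn ℝ 2 Φ U) (hl : ContDiffOn ℝ 2 l U) (hw : ContDiff ℝ 1 w)
    (hw0 : ∀ s, 0 ≤ w s)
    (hf : ∀ t, HasDerivAt f (g t) t) (hh : ∀ t, HasDerivAt h (g t ^ 2) t)
    (hrad : ∀ x ∈ U, ∑ i, x i * pd i Φ x = 0)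
    (heig : ∀ x ∈ U, ‖x‖ ^ 2 * ∑ i, pd i (pd i Φ) x = -lam * Φ x)
    (x : Euc N) (hx : x ∈ U)
    (hineq : ‖x‖ ^ 2 * (∑ i, pd i (pd i l) x + ∑ i, pd i l x * pd i l x) ≤ -μ - P x) :
    w (‖x‖ ^ 2) * f (Φ x) ^ 2 * fderiv ℝ (fun y => fderiv ℝ l y y) x x
      + ((N : ℝ) - 2) * (w (‖x‖ ^ 2) * f (Φ x) ^ 2 * fderiv ℝ l x x)
      + w (‖x‖ ^ 2) * f (Φ x) ^ 2 * (fderiv ℝ l x x) ^ 2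
      + μ * (w (‖x‖ ^ 2) * f (Φ x) ^ 2) + w (‖x‖ ^ 2) * f (Φ x) ^ 2 * P x
      + ∑ i, pd i (fun y => (w (‖y‖ ^ 2) * f (Φ y) ^ 2) *
          (‖y‖ ^ 2 * pd i l y - fderiv ℝ l y y * y i)) x
      - ∑ i, pd i (fun y => (w (‖y‖ ^ 2) * ‖y‖ ^ 2 * h (Φ y)) * pd i Φ y) x
      ≤ lam * (w (‖x‖ ^ 2) * h (Φ x) * Φ x) := by
  have hUx := hU.mem_nhds hx
  have dn : DifferentiableAt ℝ (fun y : Euc N => ‖y‖ ^ 2) x :=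
    diff_normSq.differentiable (by simp) x
  have dw : DifferentiableAt ℝ (fun y : Euc N => w (‖y‖ ^ 2)) x :=
    ((hw.differentiable (by simp)) _).comp x dn
  have dΦ : DifferentiableAt ℝ Φ x := (hΦ.contDiffAt hUx).differentiableAt (by simp)
  have df : DifferentiableAt ℝ (fun y : Euc N => f (Φ y)) x :=
    (hf (Φ x)).differentiableAt.comp x dΦ
  have dh : DifferentiableAt ℝ (fun y : Euc N => h (Φ y)) x :=
    (hh (Φ x)).differentiableAt.comp x dΦ
  have dli : ∀ i, DifferentiableAt ℝ (pd i l) x := fun i =>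
    ((contDiffOn_pd hU hl (m := 1) (by norm_num) i).contDiffAt hUx).differentiableAt (by simp)
  have dΦi : ∀ i, DifferentiableAt ℝ (pd i Φ) x := fun i =>
    ((contDiffOn_pd hU hΦ (m := 1) (by norm_num) i).contDiffAt hUx).differentiableAt (by simp)
  have dD : DifferentiableAt ℝ (fun y => fderiv ℝ l y y) x :=
    ((contDiffOn_euler hU hl (m := 1) (by norm_num)).contDiffAt hUx).differentiableAt (by simp)
  have dc : ∀ i, DifferentiableAt ℝ (fun y : Euc N => y i) x := fun i =>
    (diff_coord i).differentiable (by simp) x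
  have pw : ∀ i, pd i (fun y : Euc N => w (‖y‖ ^ 2)) x = deriv w (‖x‖ ^ 2) * (2 * x i) := by
    intro i
    rw [pd_comp (f := w) dn ((hw.differentiable (by simp)) _).hasDerivAt, pd_normSq]
  have pf : ∀ i, pd i (fun y : Euc N => f (Φ y) ^ 2) x = 2 * f (Φ x) * g (Φ x) * pd i Φ x := by
    intro i
    have := pd_mul df df i
    rw [pd_comp dΦ (hf _)] at this
    simp only [sq]; rw [this]; ring
  have ph : ∀ i, pd i (fun y : Euc N => h (Φ y)) x = g (Φ x) ^ 2 * pd i Φ x := by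
    intro i
    rw [pd_comp dΦ (hh _)]
  have df2 : DifferentiableAt ℝ (fun y : Euc N => f (Φ y) ^ 2) x := df.pow 2
  have e1 : ∀ i, pd i (fun y => (w (‖y‖ ^ 2) * f (Φ y) ^ 2) *
          (‖y‖ ^ 2 * pd i l y - fderiv ℝ l y y * y i)) x
        = 2 * deriv w (‖x‖ ^ 2) * f (Φ x) ^ 2 *
            (‖x‖ ^ 2 * (x i * pd i l x) - fderiv ℝ l x x * (x i * x i))
          + 2 * w (‖x‖ ^ 2) * f (Φ x) * g (Φ x) *
            (‖x‖ ^ 2 * (pd i Φ x * pd i l x) - fderiv ℝ l x x * (x i * pd i Φ x))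
          + w (‖x‖ ^ 2) * f (Φ x) ^ 2 * (2 * (x i * pd i l x) + ‖x‖ ^ 2 * pd i (pd i l) x
            - x i * pd i (fun y => fderiv ℝ l y y) x - fderiv ℝ l x x) := by
    intro i
    rw [pd_mul (a := fun y => w (‖y‖ ^ 2) * f (Φ y) ^ 2) (dw.fun_mul df2)
      ((dn.fun_mul (dli i)).fun_sub (dD.fun_mul (dc i))), pd_mul dw df2, pw, pf,
      pd_sub (dn.fun_mul (dli i)) (dD.fun_mul (dc i)), pd_mul dn (dli i), pd_mul dD (dc i),
      pd_normSq, pd_coord]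
    ring
  have e2 : ∀ i, pd i (fun y => (w (‖y‖ ^ 2) * ‖y‖ ^ 2 * h (Φ y)) * pd i Φ y) x
        = (2 * deriv w (‖x‖ ^ 2) * ‖x‖ ^ 2 + 2 * w (‖x‖ ^ 2)) * h (Φ x) * (x i * pd i Φ x)
          + w (‖x‖ ^ 2) * ‖x‖ ^ 2 * g (Φ x) ^ 2 * (pd i Φ x * pd i Φ x)
          + w (‖x‖ ^ 2) * ‖x‖ ^ 2 * h (Φ x) * pd i (pd i Φ) x := by
    intro i
    rw [pd_mul (a := fun y => w (‖y‖ ^ 2) * ‖y‖ ^ 2 * h (Φ y)) ((dw.fun_mul dn).fun_mul dh) (dΦi i),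
      pd_mul (a := fun y => w (‖y‖ ^ 2) * ‖y‖ ^ 2) (dw.fun_mul dn) dh, pd_mul dw dn, pw, ph,
      pd_normSq]
    ring
  have s1 : ∑ i, pd i (fun y => (w (‖y‖ ^ 2) * f (Φ y) ^ 2) *
          (‖y‖ ^ 2 * pd i l y - fderiv ℝ l y y * y i)) x
        = 2 * deriv w (‖x‖ ^ 2) * f (Φ x) ^ 2 *
            (‖x‖ ^ 2 * (∑ i, x i * pd i l x) - fderiv ℝ l x x * (∑ i, x i * x i))
          + 2 * w (‖x‖ ^ 2) * f (Φ x) * g (Φ x) *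
            (‖x‖ ^ 2 * (∑ i, pd i Φ x * pd i l x) - fderiv ℝ l x x * (∑ i, x i * pd i Φ x))
          + w (‖x‖ ^ 2) * f (Φ x) ^ 2 * (2 * (∑ i, x i * pd i l x)
            + ‖x‖ ^ 2 * (∑ i, pd i (pd i l) x)
            - (∑ i, x i * pd i (fun y => fderiv ℝ l y y) x) - N * fderiv ℝ l x x) := by
    rw [Finset.sum_congr rfl fun i _ => e1 i]
    simp only [Finset.sum_add_distrib, ← Finset.mul_sum, Finset.sum_sub_distrib]
    simp
  have s2 : ∑ i, pd i (fun y => (w (‖y‖ ^ 2) * ‖y‖ ^ 2 * h (Φ y)) * pd i Φ y) x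
        = (2 * deriv w (‖x‖ ^ 2) * ‖x‖ ^ 2 + 2 * w (‖x‖ ^ 2)) * h (Φ x) * (∑ i, x i * pd i Φ x)
          + w (‖x‖ ^ 2) * ‖x‖ ^ 2 * g (Φ x) ^ 2 * (∑ i, pd i Φ x * pd i Φ x)
          + w (‖x‖ ^ 2) * ‖x‖ ^ 2 * h (Φ x) * ∑ i, pd i (pd i Φ) x := by
    rw [Finset.sum_congr rfl fun i _ => e2 i]
    simp only [Finset.sum_add_distrib, ← Finset.mul_sum]
  have hD : fderiv ℝ l x x = ∑ i, x i * pd i l x := fderiv_eq_sum_pd l x x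
  have hD2 := fderiv_eq_sum_pd (fun y => fderiv ℝ l y y) x x
  have hn := normSq_eq x
  have hpos : 0 < ‖x‖ ^ 2 := by
    have : x ≠ 0 := fun h => h0U (h ▸ hx)
    positivity
  have hsq : 0 ≤ ∑ i, (g (Φ x) * ‖x‖ ^ 2 * pd i Φ x
      - f (Φ x) * (‖x‖ ^ 2 * pd i l x - fderiv ℝ l x x * x i)) ^ 2 :=
    Finset.sum_nonneg fun i _ => sq_nonneg _
  have hsq2 : ∑ i, (g (Φ x) * ‖x‖ ^ 2 * pd i Φ x
      - f (Φ x) * (‖x‖ ^ 2 * pd i l x - fderiv ℝ l x x * x i)) ^ 2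
      = (g (Φ x)) ^ 2 * (‖x‖ ^ 2) ^ 2 * (∑ i, pd i Φ x * pd i Φ x)
        - 2 * g (Φ x) * f (Φ x) * (‖x‖ ^ 2) ^ 2 * (∑ i, pd i Φ x * pd i l x)
        + 2 * g (Φ x) * f (Φ x) * ‖x‖ ^ 2 * fderiv ℝ l x x * (∑ i, x i * pd i Φ x)
        + f (Φ x) ^ 2 * (‖x‖ ^ 2) ^ 2 * (∑ i, pd i l x * pd i l x)
        - 2 * f (Φ x) ^ 2 * ‖x‖ ^ 2 * fderiv ℝ l x x * (∑ i, x i * pd i l x)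
        + f (Φ x) ^ 2 * (fderiv ℝ l x x) ^ 2 * (∑ i, x i * x i) := by
    simp only [Finset.mul_sum, ← Finset.sum_add_distrib, ← Finset.sum_sub_distrib]
    exact Finset.sum_congr rfl fun i _ => by ring
  rw [hsq2, hrad x hx, ← hD, ← hn] at hsq
  rw [s1, s2, hD2, hrad x hx, ← hD, ← hn]
  have he := heig x hx
  have hwx := hw0 (‖x‖ ^ 2)
  generalize ‖x‖ ^ 2 = r at *
  generalize fderiv ℝ l x x = D at *
  generalize f (Φ x) = F at *
  generalize g (Φ x) = G at *
  generalize h (Φ x) = H at *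
  generalize w r = W at *
  generalize (∑ i, pd i (pd i Φ) x) = A1 at *
  generalize (∑ i, pd i (pd i l) x) = A2 at *
  generalize (∑ i, pd i l x * pd i l x) = A3 at *
  generalize (∑ i, pd i Φ x * pd i Φ x) = A4 at *
  generalize (∑ i, pd i Φ x * pd i l x) = A5 at *
  have k1 : 0 ≤ G ^ 2 * r * A4 - 2 * G * F * r * A5 + F ^ 2 * (r * A3 - D ^ 2) := by
    by_contra hneg
    push Not at hneg
    have := mul_neg_of_pos_of_neg hpos hneg
    nlinarith [this, hsq]
  have k2 := mul_nonneg hwx k1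
  have k3 := mul_le_mul_of_nonneg_left hineq (mul_nonneg hwx (sq_nonneg F))
  have k4 : W * H * (r * A1) = W * H * (-lam * Φ x) := by rw [he]
  nlinarith [k2, k3, k4]

lemma static_ineq {N : ℕ} {U S : Set (Euc N)} (hU : IsOpen U) (h0U : (0 : Euc N) ∉ U)
    (hS : IsCompact S) (hSU : S ⊆ U)
    {Φ l : Euc N → ℝ} {w f g h : ℝ → ℝ} {lam μ : ℝ} (P : Euc N → ℝ)
    (hΦ : ContDiffOn ℝ 2 Φ U) (hl : ContDiffOn ℝ 2 l U) (hw : ContDiff ℝ 1 w)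
    (hw0 : ∀ s, 0 ≤ w s) (hg : Continuous g)
    (hf : ∀ t, HasDerivAt f (g t) t) (hh : ∀ t, HasDerivAt h (g t ^ 2) t)
    (hsupp : ∀ x ∉ S, w (‖x‖ ^ 2) = 0 ∨ (f (Φ x) = 0 ∧ h (Φ x) = 0))
    (hrad : ∀ x ∈ U, ∑ i, x i * pd i Φ x = 0)
    (heig : ∀ x ∈ U, ‖x‖ ^ 2 * ∑ i, pd i (pd i Φ) x = -lam * Φ x)
    (hP : ContinuousOn P S)
    (hineq : ∀ x ∈ S, ‖x‖ ^ 2 * (∑ i, pd i (pd i l) x + ∑ i, pd i l x * pd i l x) ≤ -μ - P x) :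
    (∫ x, w (‖x‖ ^ 2) * f (Φ x) ^ 2 * fderiv ℝ (fun y => fderiv ℝ l y y) x x)
      + ((N : ℝ) - 2) * (∫ x, w (‖x‖ ^ 2) * f (Φ x) ^ 2 * fderiv ℝ l x x)
      + (∫ x, w (‖x‖ ^ 2) * f (Φ x) ^ 2 * (fderiv ℝ l x x) ^ 2)
      + μ * (∫ x, w (‖x‖ ^ 2) * f (Φ x) ^ 2) + (∫ x, w (‖x‖ ^ 2) * f (Φ x) ^ 2 * P x)
      ≤ lam * (∫ x, w (‖x‖ ^ 2) * h (Φ x) * Φ x) := by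
  have cf : ContDiff ℝ 1 f := contDiff_one_iff_deriv.2
    ⟨fun t => (hf t).differentiableAt, by
      rw [show deriv f = g from funext fun t => (hf t).deriv]; exact hg⟩
  have ch : ContDiff ℝ 1 h := contDiff_one_iff_deriv.2
    ⟨fun t => (hh t).differentiableAt, by
      rw [show deriv h = fun t => g t ^ 2 from funext fun t => (hh t).deriv]; exact hg.pow 2⟩
  have hΦ1 : ContDiffOn ℝ 1 Φ U := hΦ.of_le (by norm_num)
  have cfΦ : ContDiffOn ℝ 1 (fun x => f (Φ x)) U := cf.comp_contDiffOn hΦ1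
  have chΦ : ContDiffOn ℝ 1 (fun x => h (Φ x)) U := ch.comp_contDiffOn hΦ1
  have cn : ContDiffOn ℝ 1 (fun x : Euc N => ‖x‖ ^ 2) U :=
    (diff_normSq.of_le (by norm_num)).contDiffOn
  have cw : ContDiffOn ℝ 1 (fun x : Euc N => w (‖x‖ ^ 2)) U := hw.comp_contDiffOn cn
  have cz : ContDiffOn ℝ 1 (fun x : Euc N => w (‖x‖ ^ 2) * f (Φ x) ^ 2) U := cw.mul (cfΦ.pow 2)
  have cD : ContDiffOn ℝ 1 (fun y => fderiv ℝ l y y) U :=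
    contDiffOn_euler hU hl (by norm_num)
  have cD2 : ContDiffOn ℝ 0 (fun x => fderiv ℝ (fun y => fderiv ℝ l y y) x x) U :=
    contDiffOn_euler hU cD (by norm_num)
  have z0 : ∀ x ∉ S, w (‖x‖ ^ 2) * f (Φ x) ^ 2 = 0 := by
    intro x hx
    rcases hsupp x hx with h | h <;> simp [h]
  have zc := cz.continuousOn.mono hSU
  have Dc := cD.continuousOn.mono hSU
  have D2c := cD2.continuousOn.mono hSU
  have i1 : Integrable fun x => w (‖x‖ ^ 2) * f (Φ x) ^ 2 *
      fderiv ℝ (fun y => fderiv ℝ l y y) x x :=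
    integrable_of_compact hS (zc.mul D2c) fun x hx => by rw [z0 x hx]; simp
  have i2 : Integrable fun x => w (‖x‖ ^ 2) * f (Φ x) ^ 2 * fderiv ℝ l x x :=
    integrable_of_compact hS (zc.mul Dc) fun x hx => by rw [z0 x hx]; simp
  have i3 : Integrable fun x => w (‖x‖ ^ 2) * f (Φ x) ^ 2 * (fderiv ℝ l x x) ^ 2 :=
    integrable_of_compact hS (zc.mul (Dc.pow 2)) fun x hx => by rw [z0 x hx]; simp
  have i4 : Integrable fun x => w (‖x‖ ^ 2) * f (Φ x) ^ 2 :=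
    integrable_of_compact hS zc z0
  have i5 : Integrable fun x => w (‖x‖ ^ 2) * f (Φ x) ^ 2 * P x :=
    integrable_of_compact hS (zc.mul hP) fun x hx => by rw [z0 x hx]; simp
  have i6 : Integrable fun x => w (‖x‖ ^ 2) * h (Φ x) * Φ x :=
    integrable_of_compact hS (((cw.mul chΦ).mul hΦ1).continuousOn.mono hSU) fun x hx => by
      rcases hsupp x hx with h | h <;> simp [h]
  have i7 : ∀ i : Fin N, _ := fun i => integral_pd hU hS hSU
    (V := fun y => (w (‖y‖ ^ 2) * f (Φ y) ^ 2) *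
          (‖y‖ ^ 2 * pd i l y - fderiv ℝ l y y * y i))
    (cz.mul ((cn.mul (contDiffOn_pd hU hl (by norm_num) i)).sub
      (cD.mul ((diff_coord i).of_le (by norm_num)).contDiffOn)))
    (fun x hx => by rw [z0 x hx]; simp) i
  have i8 : ∀ i : Fin N, _ := fun i => integral_pd hU hS hSU
    (V := fun y => (w (‖y‖ ^ 2) * ‖y‖ ^ 2 * h (Φ y)) * pd i Φ y)
    (((cw.mul cn).mul chΦ).mul (contDiffOn_pd hU hΦ (by norm_num) i))
    (fun x hx => by rcases hsupp x hx with h | h <;> simp [h]) i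
  have j7 : Integrable fun x => ∑ i, pd i (fun y => (w (‖y‖ ^ 2) * f (Φ y) ^ 2) *
          (‖y‖ ^ 2 * pd i l y - fderiv ℝ l y y * y i)) x :=
    integrable_finsetSum _ fun i _ => (i7 i).1
  have j8 : Integrable fun x => ∑ i, pd i (fun y =>
      (w (‖y‖ ^ 2) * ‖y‖ ^ 2 * h (Φ y)) * pd i Φ y) x :=
    integrable_finsetSum _ fun i _ => (i8 i).1
  have m7 : ∫ x, ∑ i, pd i (fun y => (w (‖y‖ ^ 2) * f (Φ y) ^ 2) *
          (‖y‖ ^ 2 * pd i l y - fderiv ℝ l y y * y i)) x = 0 := by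
    rw [integral_finsetSum _ fun i _ => (i7 i).1]
    exact Finset.sum_eq_zero fun i _ => (i7 i).2
  have m8 : ∫ x, ∑ i, pd i (fun y =>
      (w (‖y‖ ^ 2) * ‖y‖ ^ 2 * h (Φ y)) * pd i Φ y) x = 0 := by
    rw [integral_finsetSum _ fun i _ => (i8 i).1]
    exact Finset.sum_eq_zero fun i _ => (i8 i).2
  have key := integral_mono (((((((i1.add (i2.const_mul ((N:ℝ) - 2))).add i3).add
    (i4.const_mul μ)).add i5).add j7).sub j8)) (i6.const_mul lam) (fun x => by
      by_cases hx : x ∈ S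
      · exact static_pointwise hU h0U P hΦ hl hw hw0 hf hh hrad heig x (hSU hx) (hineq x hx)
      · have a1 : ∀ i, _ := fun i => pd_eq_zero_of_supp hS
          (V := fun y => (w (‖y‖ ^ 2) * f (Φ y) ^ 2) *
            (‖y‖ ^ 2 * pd i l y - fderiv ℝ l y y * y i))
          (fun x hx => by rw [z0 x hx]; simp) i x hx
        have a2 : ∀ i, _ := fun i => pd_eq_zero_of_supp hS
          (V := fun y => (w (‖y‖ ^ 2) * ‖y‖ ^ 2 * h (Φ y)) * pd i Φ y)
          (fun x hx => by rcases hsupp x hx with h | h <;> simp [h]) i x hx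
        have a3 : w (‖x‖ ^ 2) * h (Φ x) = 0 := by
          rcases hsupp x hx with h | h <;> simp [h]
        simp only [Pi.add_apply, Pi.sub_apply, a1, a2, z0 x hx, a3]
        simp)
  rw [integral_sub' (((((i1.add (i2.const_mul ((N:ℝ) - 2))).add i3).add
    (i4.const_mul μ)).add i5).add j7) j8,
    integral_add' ((((i1.add (i2.const_mul ((N:ℝ) - 2))).add i3).add
    (i4.const_mul μ)).add i5) j7,
    integral_add' (((i1.add (i2.const_mul ((N:ℝ) - 2))).add i3).add (i4.const_mul μ)) i5,
    integral_add' ((i1.add (i2.const_mul ((N:ℝ) - 2))).add i3) (i4.const_mul μ),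
    integral_add' (i1.add (i2.const_mul ((N:ℝ) - 2))) i3,
    integral_add' i1 (i2.const_mul ((N:ℝ) - 2)),
    integral_const_mul, integral_const_mul, integral_const_mul, m7, m8] at key
  linarith

/-! ### ODE part -/

lemma no_pos_of_deriv_le {X X' : ℝ → ℝ} {T c : ℝ} (hc : 0 < c)
    (hd : ∀ t ≥ T, HasDerivAt X (X' t) t) (h : ∀ t ≥ T, X' t ≤ -c) (hpos : ∀ t ≥ T, 0 < X t) :
    False := by
  have hanti : AntitoneOn (fun t => X t + c * t) (Ici T) := by
    have hd2 : ∀ t ≥ T, HasDerivAt (fun t => X t + c * t) (X' t + c) t := fun t ht => by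
      simpa using (hd t ht).fun_add ((hasDerivAt_id t).const_mul c)
    refine antitoneOn_of_deriv_nonpos (convex_Ici T)
      (fun t ht => (hd2 t ht).continuousAt.continuousWithinAt)
      (fun t ht => (hd2 t (interior_subset ht)).differentiableAt.differentiableWithinAt) ?_
    intro t ht
    have ht' : t ≥ T := interior_subset ht
    rw [(hd2 t ht').deriv]
    linarith [h t ht']
  have hX := hpos T le_rfl
  have h1 : T ≤ T + X T / c := by linarith [div_pos hX hc]
  have h2 := hanti (mem_Ici.2 le_rfl) (mem_Ici.2 h1) h1
  have h3 := hpos _ h1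
  simp only at h2
  have : c * (X T / c) = X T := by field_simp
  nlinarith

lemma ode_contra {y z z' : ℝ → ℝ} {k σ C0 β θ : ℝ} (hσ : 0 < σ) (hC0 : 0 < C0)
    (hy : ∀ t ≥ 1, HasDerivAt y (z t) t) (hz : ∀ t ≥ 1, HasDerivAt z (z' t) t)
    (hode : ∀ t ≥ 1, z' t ≤ σ ^ 2 - (z t + k) ^ 2 - C0 * exp (β * t + θ * y t))
    (hβ : 0 < β)
    (hcase : (0 ≤ θ ∧ θ * (k + σ) < β) ∨ (θ < 0 ∧ ∃ C, ∀ t ≥ 1, y t ≤ C)) : False := by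
  -- exponentials
  have hexp : ∀ a : ℝ, ∀ t ≥ 1, HasDerivAt (fun t => exp (y t + a * t))
      (exp (y t + a * t) * (z t + a)) t := by
    intro a t ht
    have := ((hy t ht).add ((hasDerivAt_id t).const_mul a)).exp
    simpa using this
  -- step 1
  have hQd : ∀ t ≥ 1, HasDerivAt (fun t => exp (y t + (k - σ) * t) * (z t + (k + σ)))
      (exp (y t + (k - σ) * t) * (z t + (k - σ)) * (z t + (k + σ)) +
        exp (y t + (k - σ) * t) * z' t) t := by
    intro t ht
    exact (hexp (k - σ) t ht).mul ((hz t ht).add_const _)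
  have hQ : AntitoneOn (fun t => exp (y t + (k - σ) * t) * (z t + (k + σ))) (Ici 1) := by
    refine antitoneOn_of_deriv_nonpos (convex_Ici 1)
      (fun t ht => (hQd t ht).continuousAt.continuousWithinAt)
      (fun t ht => (hQd t (interior_subset ht)).differentiableAt.differentiableWithinAt) ?_
    intro t ht
    have ht' : t ≥ 1 := interior_subset ht
    rw [(hQd t ht').deriv]
    have h1 := hode t ht'
    have h2 := exp_pos (β * t + θ * y t)
    have h3 := exp_pos (y t + (k - σ) * t)
    have h4 : (z t + (k - σ)) * (z t + (k + σ)) + z' t ≤ 0 := by nlinarith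
    nlinarith [mul_nonneg h3.le (neg_nonneg.2 h4)]
  have hm : ∀ t ≥ 1, 0 ≤ z t + (k + σ) := by
    intro t1 ht1
    by_contra hneg
    push Not at hneg
    have hq := mul_neg_of_pos_of_neg (exp_pos (y t1 + (k - σ) * t1)) hneg
    refine no_pos_of_deriv_le (X := fun t => exp (y t + (k + σ) * t)) (T := t1)
      (neg_pos.2 hq) (fun t ht => hexp (k + σ) t (le_trans ht1 ht)) ?_ (fun t _ => exp_pos _)
    intro t ht
    have hanti := hQ (mem_Ici.2 ht1) (mem_Ici.2 (le_trans ht1 ht)) ht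
    simp only at hanti
    have e1 : exp (y t + (k + σ) * t) = exp (2 * σ * t) * exp (y t + (k - σ) * t) := by
      rw [← exp_add]; ring_nf
    have e2 : 1 ≤ exp (2 * σ * t) := by
      apply one_le_exp
      have : 0 ≤ t := by linarith
      positivity
    rw [e1, neg_neg, mul_assoc]
    nlinarith
  have hlow : ∀ t ≥ 1, y 1 + (k + σ) - (k + σ) * t ≤ y t := by
    have hd2 : ∀ t ≥ 1, HasDerivAt (fun t => y t + (k + σ) * t) (z t + (k + σ)) t := fun t ht => by
      simpa using (hy t ht).fun_add ((hasDerivAt_id t).const_mul (k + σ))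
    have hmono : MonotoneOn (fun t => y t + (k + σ) * t) (Ici 1) := by
      refine monotoneOn_of_deriv_nonneg (convex_Ici 1)
        (fun t ht => (hd2 t ht).continuousAt.continuousWithinAt)
        (fun t ht => (hd2 t (interior_subset ht)).differentiableAt.differentiableWithinAt) ?_
      intro t ht
      rw [(hd2 t (interior_subset ht)).deriv]
      exact hm t (interior_subset ht)
    intro t ht
    have := hmono (mem_Ici.2 le_rfl) (mem_Ici.2 ht) ht
    simp only at this
    linarith
  -- step 2
  obtain ⟨δ, C, hδ, hC⟩ : ∃ δ C : ℝ, 0 < δ ∧ ∀ t ≥ 1, δ * t - C ≤ β * t + θ * y t := by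
    rcases hcase with ⟨h1, h2⟩ | ⟨h1, C, h2⟩
    · refine ⟨β - θ * (k + σ), -(θ * (y 1 + (k + σ))), by linarith, fun t ht => ?_⟩
      have := mul_le_mul_of_nonneg_left (hlow t ht) h1
      nlinarith
    · refine ⟨β, -(θ * C), hβ, fun t ht => ?_⟩
      have := mul_le_mul_of_nonpos_left (h2 t ht) h1.le
      linarith
  obtain ⟨T, hT1, hT⟩ : ∃ T ≥ (1:ℝ), ∀ t ≥ T, σ ^ 2 + 1 ≤ C0 * exp (β * t + θ * y t) := by
    refine ⟨max 1 (((σ ^ 2 + 1) / C0 + C) / δ), le_max_left _ _, fun t ht => ?_⟩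
    have ht1 : t ≥ 1 := le_trans (le_max_left _ _) ht
    have ht2 : ((σ ^ 2 + 1) / C0 + C) / δ ≤ t := le_trans (le_max_right _ _) ht
    rw [div_le_iff₀ hδ] at ht2
    have h3 := hC t ht1
    have h4 : (σ ^ 2 + 1) / C0 ≤ exp (β * t + θ * y t) := by
      have := add_one_le_exp (β * t + θ * y t)
      nlinarith
    rw [div_le_iff₀ hC0] at h4
    linarith
  -- step 3
  have hXd : ∀ t ≥ 1, HasDerivAt (fun t => exp (y t + k * t) * (z t + k))
      (exp (y t + k * t) * (z t + k) * (z t + k) + exp (y t + k * t) * z' t) t := by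
    intro t ht
    exact (hexp k t ht).mul ((hz t ht).add_const _)
  have hX2 : ∀ t ≥ T, exp (y t + k * t) * (z t + k) * (z t + k) + exp (y t + k * t) * z' t
      ≤ - exp (y t + k * t) := by
    intro t ht
    have h1 := hode t (le_trans hT1 ht)
    have h2 := hT t ht
    have h3 := exp_pos (y t + k * t)
    have h4 : (z t + k) * (z t + k) + z' t + 1 ≤ 0 := by nlinarith
    nlinarith [mul_nonneg h3.le (neg_nonneg.2 h4)]
  have hXanti : AntitoneOn (fun t => exp (y t + k * t) * (z t + k)) (Ici T) := by
    refine antitoneOn_of_deriv_nonpos (convex_Ici T)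
      (fun t ht => (hXd t (le_trans hT1 ht)).continuousAt.continuousWithinAt)
      (fun t ht => (hXd t (le_trans hT1
        (interior_subset ht))).differentiableAt.differentiableWithinAt) ?_
    intro t ht
    have ht' : t ≥ T := interior_subset ht
    rw [(hXd t (le_trans hT1 ht')).deriv]
    exact (hX2 t ht').trans (neg_nonpos.2 (exp_pos _).le)
  have hX1 : ∀ t ≥ T, 0 ≤ exp (y t + k * t) * (z t + k) := by
    intro t1 ht1
    by_contra hneg
    push Not at hneg
    refine no_pos_of_deriv_le (X := fun t => exp (y t + k * t)) (T := t1)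
      (neg_pos.2 hneg) (fun t ht => hexp k t (le_trans hT1 (le_trans ht1 ht))) ?_
      (fun t _ => exp_pos _)
    intro t ht
    rw [neg_neg]
    exact hXanti (mem_Ici.2 ht1) (mem_Ici.2 (le_trans ht1 ht)) ht
  have hXmono : MonotoneOn (fun t => exp (y t + k * t)) (Ici T) := by
    refine monotoneOn_of_deriv_nonneg (convex_Ici T)
      (fun t ht => (hexp k t (le_trans hT1 ht)).continuousAt.continuousWithinAt)
      (fun t ht => (hexp k t (le_trans hT1
        (interior_subset ht))).differentiableAt.differentiableWithinAt) ?_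
    intro t ht
    rw [(hexp k t (le_trans hT1 (interior_subset ht))).deriv]
    exact hX1 t (interior_subset ht)
  refine no_pos_of_deriv_le (X := fun t => exp (y t + k * t) * (z t + k) + 1) (T := T)
    (exp_pos (y T + k * T)) (fun t ht => (hXd t (le_trans hT1 ht)).add_const 1) ?_
    (fun t ht => by have := hX1 t ht; linarith)
  intro t ht
  exact (hX2 t ht).trans (neg_le_neg (hXmono (mem_Ici.2 le_rfl) (mem_Ici.2 ht) ht))

/-! ### Dilation averages -/

lemma hasDerivAt_exp_smul {N : ℕ} {U : Set (Euc N)} (hU : IsOpen U) {E0 : Euc N → ℝ}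
    (hE : ContDiffOn ℝ 1 E0 U) {x : Euc N} {t : ℝ} (hx : exp t • x ∈ U) :
    HasDerivAt (fun t : ℝ => E0 (exp t • x)) (fderiv ℝ E0 (exp t • x) (exp t • x)) t := by
  have h1 : HasDerivAt (fun t : ℝ => exp t • x) (exp t • x) t := (hasDerivAt_exp t).smul_const x
  have h2 : DifferentiableAt ℝ E0 (exp t • x) :=
    (hE.contDiffAt (hU.mem_nhds hx)).differentiableAt (by simp)
  exact h2.hasFDerivAt.comp_hasDerivAt t h1

lemma hasDerivAt_scale {N : ℕ} {U S : Set (Euc N)} (hU : IsOpen U) (hS : IsCompact S)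
    (hSU : ∀ t : ℝ, 0 ≤ t → ∀ x ∈ S, exp t • x ∈ U) {E0 ζ : Euc N → ℝ}
    (hE : ContDiffOn ℝ 1 E0 U) (hζ : ContinuousOn ζ S) (h0 : ∀ x ∉ S, ζ x = 0)
    {t : ℝ} (ht : 0 < t) :
    HasDerivAt (fun t : ℝ => ∫ x, ζ x * E0 (exp t • x))
      (∫ x, ζ x * fderiv ℝ E0 (exp t • x) (exp t • x)) t := by
  have hEu : ContinuousOn (fun x => fderiv ℝ E0 x x) U :=
    (contDiffOn_euler hU hE (m := 0) (by norm_num)).continuousOn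
  have hsc : ∀ s : ℝ, Continuous fun x : Euc N => exp s • x := fun s => continuous_const_smul _
  have c1 : ∀ s : ℝ, 0 ≤ s → ContinuousOn (fun x => ζ x * E0 (exp s • x)) S := fun s hs =>
    hζ.mul (hE.continuousOn.comp (hsc s).continuousOn (hSU s hs))
  have c2 : ∀ s : ℝ, 0 ≤ s →
      ContinuousOn (fun x => ζ x * fderiv ℝ E0 (exp s • x) (exp s • x)) S := fun s hs =>
    hζ.mul (hEu.comp (hsc s).continuousOn (hSU s hs))
  have i1 : ∀ s : ℝ, 0 ≤ s → Integrable (fun x => ζ x * E0 (exp s • x)) := fun s hs =>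
    integrable_of_compact hS (c1 s hs) fun x hx => by simp [h0 x hx]
  have i2 : ∀ s : ℝ, 0 ≤ s →
      Integrable (fun x => ζ x * fderiv ℝ E0 (exp s • x) (exp s • x)) := fun s hs =>
    integrable_of_compact hS (c2 s hs) fun x hx => by simp [h0 x hx]
  have cb : ContinuousOn (fun p : ℝ × Euc N =>
      ζ p.2 * fderiv ℝ E0 (exp p.1 • p.2) (exp p.1 • p.2)) (Icc 0 (2 * t) ×ˢ S) := by
    refine ContinuousOn.mul (hζ.comp continuous_snd.continuousOn fun p hp => hp.2) ?_
    have hc : Continuous fun p : ℝ × Euc N => exp p.1 • p.2 :=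
      (continuous_exp.comp continuous_fst).smul continuous_snd
    exact hEu.comp (f := fun p : ℝ × Euc N => exp p.1 • p.2) hc.continuousOn
      fun p hp => hSU p.1 hp.1.1 p.2 hp.2
  obtain ⟨C, hC⟩ := (isCompact_Icc.prod hS).exists_bound_of_continuousOn cb
  have hb : Integrable (S.indicator fun _ : Euc N => C) :=
    (integrable_indicator_iff hS.measurableSet).2
      (integrableOn_const hS.measure_lt_top.ne)
  refine (hasDerivAt_integral_of_dominated_loc_of_deriv_le
    (μ := (volume : Measure (Euc N)))
    (F := fun s x => ζ x * E0 (exp s • x))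
    (F' := fun s x => ζ x * fderiv ℝ E0 (exp s • x) (exp s • x))
    (s := Ioo 0 (2 * t)) (bound := S.indicator fun _ => C)
    (Ioo_mem_nhds ht (by linarith)) ?_ (i1 t ht.le) (i2 t ht.le).aestronglyMeasurable
    ?_ hb ?_).2
  · filter_upwards [Ioi_mem_nhds ht] with s hs using (i1 s (le_of_lt hs)).aestronglyMeasurable
  · refine Filter.Eventually.of_forall fun x s hs => ?_
    by_cases hx : x ∈ S
    · rw [indicator_of_mem hx]
      exact hC (s, x) ⟨⟨hs.1.le, hs.2.le⟩, hx⟩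
    · simp [h0 x hx, hx]
  · refine Filter.Eventually.of_forall fun x s hs => ?_
    by_cases hx : x ∈ S
    · exact (hasDerivAt_exp_smul hU hE (hSU s hs.1.le x hx)).const_mul _
    · simpa [h0 x hx] using hasDerivAt_const s (0:ℝ)

lemma integral_scale {N : ℕ} (ζ G : Euc N → ℝ) (t : ℝ) :
    ∫ x, ζ x * G (exp t • x) = ∫ x, (exp (-(N * t)) * ζ (exp (-t) • x)) * G x := by
  have h := Measure.integral_comp_smul (volume : Measure (Euc N))
    (fun x => ζ (exp (-t) • x) * G x) (exp t)
  have e1 : ∀ x : Euc N, exp (-t) • exp t • x = x := fun x => by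
    rw [smul_smul, ← exp_add]; simp
  simp only [e1] at h
  rw [h]
  have : |((exp t) ^ Module.finrank ℝ (Euc N))⁻¹| = exp (-(N * t)) := by
    rw [abs_of_pos (by positivity), finrank_euclideanSpace_fin, exp_neg, ← exp_nat_mul]
  rw [this, smul_eq_mul, ← integral_const_mul]
  congr 1; ext x; ring

/-! ### Geometry of the cone -/

lemma isOpen_cone {N : ℕ} {Ω : Set (Euc N)} (hΩ : IsConeDomain N Ω) : IsOpen (cone N Ω) := by
  obtain ⟨V, hV, hVΩ⟩ := isOpen_induced_iff.1 hΩ.2.2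
  have hc : ContinuousOn (fun x : Euc N => ‖x‖⁻¹ • x) {x | x ≠ 0} :=
    (continuousOn_id.norm.inv₀ fun x hx => norm_ne_zero_iff.2 hx).smul continuousOn_id
  have := hc.isOpen_inter_preimage isOpen_ne hV
  convert this using 1
  ext x
  simp only [cone, mem_ofPred_eq, mem_inter_iff, mem_preimage]
  refine and_congr_right fun hx => ?_
  have hs : ‖x‖⁻¹ • x ∈ Metric.sphere (0 : Euc N) 1 := by
    simp [norm_smul, norm_ne_zero_iff.2 hx]
  have := congrArg (fun A => (⟨_, hs⟩ : Metric.sphere (0 : Euc N) 1) ∈ A) hVΩ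
  simpa using this.symm.to_iff

lemma coneGT_eq {N : ℕ} {Ω : Set (Euc N)} {ρ : ℝ} (hρ : 0 < ρ) :
    coneGT N ρ Ω = cone N Ω ∩ {x | ρ < ‖x‖} := by
  ext x
  simp only [coneGT, cone, mem_ofPred_eq, mem_inter_iff]
  constructor
  · rintro ⟨h1, h2⟩
    exact ⟨⟨norm_pos_iff.1 (hρ.trans h1), h2⟩, h1⟩
  · rintro ⟨⟨_, h2⟩, h1⟩
    exact ⟨h1, h2⟩

lemma isOpen_coneGT {N : ℕ} {Ω : Set (Euc N)} (hΩ : IsConeDomain N Ω) {ρ : ℝ} (hρ : 0 < ρ) :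
    IsOpen (coneGT N ρ Ω) := by
  rw [coneGT_eq hρ]
  exact (isOpen_cone hΩ).inter (isOpen_lt continuous_const continuous_norm)

lemma normalize_smul {N : ℕ} {c : ℝ} (hc : 0 < c) (x : Euc N) :
    ‖c • x‖⁻¹ • (c • x) = ‖x‖⁻¹ • x := by
  rw [norm_smul, smul_smul, Real.norm_of_nonneg hc.le, mul_inv]
  congr 1
  field_simp

lemma smul_mem_cone {N : ℕ} {Ω : Set (Euc N)} {c : ℝ} (hc : 0 < c) (x : Euc N) :
    c • x ∈ cone N Ω ↔ x ∈ cone N Ω := by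
  simp only [cone, mem_ofPred_eq, normalize_smul hc, ne_eq, smul_eq_zero, hc.ne', false_or]

/-- The 0-homogeneous extension, set to zero outside the cone. -/
def Phi (N : ℕ) (Ω : Set (Euc N)) (φ : Euc N → ℝ) : Euc N → ℝ :=
  (cone N Ω).indicator fun x => φ (‖x‖⁻¹ • x)

lemma Phi_smul {N : ℕ} {Ω : Set (Euc N)} {φ : Euc N → ℝ} {c : ℝ} (hc : 0 < c) (x : Euc N) :
    Phi N Ω φ (c • x) = Phi N Ω φ x := by
  unfold Phi
  by_cases hx : x ∈ cone N Ω
  · rw [indicator_of_mem hx, indicator_of_mem ((smul_mem_cone hc x).2 hx), normalize_smul hc]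
  · rw [indicator_of_notMem hx, indicator_of_notMem (fun h => hx ((smul_mem_cone hc x).1 h))]

lemma Phi_eventuallyEq {N : ℕ} {Ω : Set (Euc N)} (hΩ : IsConeDomain N Ω) (φ : Euc N → ℝ)
    {x : Euc N} (hx : x ∈ cone N Ω) :
    Phi N Ω φ =ᶠ[nhds x] fun y => φ (‖y‖⁻¹ • y) := by
  filter_upwards [(isOpen_cone hΩ).mem_nhds hx] with y hy
  exact indicator_of_mem hy _

lemma Phi_contDiffOn {N : ℕ} {Ω : Set (Euc N)} {lam1 : ℝ} {φ : Euc N → ℝ}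
    (hphi : DirichletEigenpair N Ω lam1 φ) : ContDiffOn ℝ 2 (Phi N Ω φ) (cone N Ω) :=
  hphi.smoothExt.congr fun _ hx => indicator_of_mem hx _

lemma Phi_nonneg {N : ℕ} {Ω : Set (Euc N)} {lam1 : ℝ} {φ : Euc N → ℝ}
    (hphi : DirichletEigenpair N Ω lam1 φ) (x : Euc N) : 0 ≤ Phi N Ω φ x :=
  indicator_nonneg (fun y hy => (hphi.pos _ hy.2).le) x

lemma Phi_pos {N : ℕ} {Ω : Set (Euc N)} {lam1 : ℝ} {φ : Euc N → ℝ}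
    (hphi : DirichletEigenpair N Ω lam1 φ) {x : Euc N} (hx : x ∈ cone N Ω) :
    0 < Phi N Ω φ x := by
  rw [Phi, indicator_of_mem hx]; exact hphi.pos _ hx.2

lemma Phi_le_one {N : ℕ} {Ω : Set (Euc N)} {lam1 : ℝ} {φ : Euc N → ℝ}
    (hphi : DirichletEigenpair N Ω lam1 φ) (x : Euc N) : Phi N Ω φ x ≤ 1 :=
  indicator_apply_le' (fun hy => hphi.le_one _ (subset_closure hy.2)) fun _ => zero_le_one

lemma Phi_rad {N : ℕ} {Ω : Set (Euc N)} (hΩ : IsConeDomain N Ω) {lam1 : ℝ} {φ : Euc N → ℝ}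
    (hphi : DirichletEigenpair N Ω lam1 φ) {x : Euc N} (hx : x ∈ cone N Ω) :
    ∑ i, x i * pd i (Phi N Ω φ) x = 0 := by
  rw [← fderiv_eq_sum_pd]
  have h := hasDerivAt_exp_smul (isOpen_cone hΩ) ((Phi_contDiffOn hphi).of_le (by norm_num))
    (x := x) (t := 0) (by simpa using hx)
  simp only [Phi_smul (exp_pos _), exp_zero, one_smul] at h
  exact h.unique (hasDerivAt_const 0 _)

lemma rpow_neg_two_mul {r : ℝ} (hr : 0 < r) : r ^ 2 * r ^ (-(2:ℝ)) = 1 := by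
  rw [rpow_neg hr.le]
  norm_cast
  field_simp

lemma Phi_eig {N : ℕ} {Ω : Set (Euc N)} (hΩ : IsConeDomain N Ω) {lam1 : ℝ} {φ : Euc N → ℝ}
    (hphi : DirichletEigenpair N Ω lam1 φ) {x : Euc N} (hx : x ∈ cone N Ω) :
    ‖x‖ ^ 2 * ∑ i, pd i (pd i (Phi N Ω φ)) x = -lam1 * Phi N Ω φ x := by
  have hd : DifferentiableAt ℝ (fderiv ℝ (Phi N Ω φ)) x :=
    (((Phi_contDiffOn hphi).fderiv_of_isOpen (isOpen_cone hΩ) (m := 1) (by norm_num)).contDiffAt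
      ((isOpen_cone hΩ).mem_nhds hx)).differentiableAt (by simp)
  rw [← lap_eq_sum_pd hd]
  have h1 : lap N (Phi N Ω φ) x = lap N (fun y => φ (‖y‖⁻¹ • y)) x := by
    unfold lap
    rw [(Filter.EventuallyEq.iteratedFDeriv ℝ (Phi_eventuallyEq hΩ φ hx) 2).eq_of_nhds]
  rw [h1, hphi.eigen x hx]
  have h2 : Phi N Ω φ x = φ (‖x‖⁻¹ • x) := indicator_of_mem hx _
  have h3 := rpow_neg_two_mul (norm_pos_iff.2 hx.1)
  rw [h2]
  linear_combination (-lam1 * φ (‖x‖⁻¹ • x)) * h3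

/-- Compact truncated piece of the cone. -/
def trunc (N : ℕ) (Ω : Set (Euc N)) (φ : Euc N → ℝ) (ε a b : ℝ) : Set (Euc N) :=
  {x | a ≤ ‖x‖ ∧ ‖x‖ ≤ b ∧ ‖x‖⁻¹ • x ∈ {ω | ω ∈ closure Ω ∧ ε ≤ φ ω}}

lemma trunc_compact {N : ℕ} {Ω : Set (Euc N)} {lam1 : ℝ} {φ : Euc N → ℝ}
    (hphi : DirichletEigenpair N Ω lam1 φ) {ε a b : ℝ} (ha : 0 < a) :
    IsCompact (trunc N Ω φ ε a b) := by
  have hcl : IsClosed {ω | ω ∈ closure Ω ∧ ε ≤ φ ω} :=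
    hphi.contOn.preimage_isClosed_of_isClosed isClosed_closure isClosed_Ici
  have hc : ContinuousOn (fun x : Euc N => ‖x‖⁻¹ • x) {x | a ≤ ‖x‖} :=
    (continuousOn_id.norm.inv₀ fun x hx => (ha.trans_le hx).ne').smul continuousOn_id
  have h1 : IsClosed ({x : Euc N | a ≤ ‖x‖} ∩ (fun x : Euc N => ‖x‖⁻¹ • x) ⁻¹'
      {ω | ω ∈ closure Ω ∧ ε ≤ φ ω}) :=
    hc.preimage_isClosed_of_isClosed (isClosed_le continuous_const continuous_norm) hcl
  have h2 := (isCompact_closedBall (0 : Euc N) b).inter_right h1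
  have h3 : trunc N Ω φ ε a b = Metric.closedBall (0 : Euc N) b ∩ ({x : Euc N | a ≤ ‖x‖} ∩
      (fun x : Euc N => ‖x‖⁻¹ • x) ⁻¹' {ω | ω ∈ closure Ω ∧ ε ≤ φ ω}) := by
    apply Set.ext
    intro x
    rw [mem_inter_iff, mem_inter_iff, mem_closedBall_zero_iff]
    exact ⟨fun h => ⟨h.2.1, h.1, h.2.2⟩, fun h => ⟨h.2.1, h.1, h.2.2⟩⟩
  rw [h3]
  exact h2

lemma trunc_subset {N : ℕ} {Ω : Set (Euc N)} {lam1 : ℝ} {φ : Euc N → ℝ}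
    (hphi : DirichletEigenpair N Ω lam1 φ) {ε a b : ℝ} (ha : 0 < a) (hε : 0 < ε) :
    trunc N Ω φ ε a b ⊆ cone N Ω := by
  rintro x ⟨h1, _, h2, h3⟩
  refine ⟨norm_pos_iff.1 (ha.trans_le h1), ?_⟩
  by_contra h
  have := hphi.bdryZero _ ⟨h2, h⟩
  linarith

lemma Phi_lt_of_notMem_trunc {N : ℕ} {Ω : Set (Euc N)} {φ : Euc N → ℝ}
    {ε a b : ℝ} (hε : 0 < ε) {x : Euc N} (hx : x ∉ trunc N Ω φ ε a b)
    (h1 : a ≤ ‖x‖) (h2 : ‖x‖ ≤ b) : Phi N Ω φ x < ε := by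
  by_cases hc : x ∈ cone N Ω
  · rw [Phi, indicator_of_mem hc]
    by_contra h
    push Not at h
    exact hx ⟨h1, h2, subset_closure hc.2, h⟩
  · rw [Phi, indicator_of_notMem hc]; exact hε

/-! ### The weight -/

lemma exists_fgh {ε : ℝ} (hε : 0 < ε) : ∃ f g h : ℝ → ℝ, Continuous g ∧
    (∀ t, HasDerivAt f (g t) t) ∧ (∀ t, HasDerivAt h (g t ^ 2) t) ∧
    (∀ t ≤ ε, f t = 0 ∧ h t = 0) ∧
    (∀ t, 0 ≤ t → 0 ≤ f t ∧ f t ≤ t ∧ t - 2 * ε ≤ f t ∧ 0 ≤ h t ∧ h t ≤ t ∧ t - 2 * ε ≤ h t) := by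
  set g : ℝ → ℝ := fun t => max 0 (min 1 ((t - ε) / ε)) with hg
  have cg : Continuous g := by fun_prop
  have g0 : ∀ t, 0 ≤ g t := fun t => le_max_left _ _
  have g1 : ∀ t, g t ≤ 1 := fun t => max_le zero_le_one (min_le_left _ _)
  have gz : ∀ t ≤ ε, g t = 0 := fun t ht =>
    max_eq_left ((min_le_right _ _).trans (div_nonpos_of_nonpos_of_nonneg (by linarith) hε.le))
  have go : ∀ t, 2 * ε ≤ t → g t = 1 := fun t ht => by
    have : 1 ≤ (t - ε) / ε := by rw [le_div_iff₀ hε]; linarith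
    simp [hg, min_eq_left this]
  have main : ∀ G : ℝ → ℝ, Continuous G → (∀ t, 0 ≤ G t) → (∀ t, G t ≤ 1) →
      (∀ t ≤ ε, G t = 0) → (∀ t, 2 * ε ≤ t → G t = 1) →
      (∀ t, HasDerivAt (fun t => ∫ s in (0:ℝ)..t, G s) (G t) t) ∧
      (∀ t ≤ ε, ∫ s in (0:ℝ)..t, G s = 0) ∧
      (∀ t, 0 ≤ t → 0 ≤ (∫ s in (0:ℝ)..t, G s) ∧ (∫ s in (0:ℝ)..t, G s) ≤ t ∧
        t - 2 * ε ≤ ∫ s in (0:ℝ)..t, G s) := by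
    intro G cG G0 G1 Gz Go
    refine ⟨fun t => (cG.integral_hasStrictDerivAt 0 t).hasDerivAt, ?_, ?_⟩
    · intro t ht
      rw [intervalIntegral.integral_congr (g := fun _ => (0:ℝ))]
      · simp
      · intro s hs
        refine Gz s ?_
        have := hs.2
        exact this.trans (max_le hε.le ht)
    · intro t ht
      have n0 : ∀ t, 0 ≤ t → 0 ≤ (∫ s in (0:ℝ)..t, G s) := fun t ht =>
        intervalIntegral.integral_nonneg ht fun s _ => G0 s
      refine ⟨n0 t ht, ?_, ?_⟩
      · have h1 : (∫ s in (0:ℝ)..t, G s) ≤ ∫ s in (0:ℝ)..t, (1:ℝ) :=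
          intervalIntegral.integral_mono_on ht (cG.intervalIntegrable 0 t)
            (continuous_const.intervalIntegrable 0 t) (fun s _ => G1 s)
        simpa using h1
      · rcases le_total t (2 * ε) with h | h
        · linarith [n0 t ht]
        · rw [← intervalIntegral.integral_add_adjacent_intervals
            (cG.intervalIntegrable 0 (2 * ε)) (cG.intervalIntegrable (2 * ε) t)]
          have e : ∫ s in (2 * ε)..t, G s = t - 2 * ε := by
            rw [intervalIntegral.integral_congr (g := fun _ => (1:ℝ))]
            · simp
            · intro s hs
              rw [uIcc_of_le h] at hs
              exact Go s hs.1
          rw [e]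
          linarith [n0 (2 * ε) (by positivity)]
  obtain ⟨a1, a2, a3⟩ := main g cg g0 g1 gz go
  obtain ⟨b1, b2, b3⟩ := main (fun t => g t ^ 2) (cg.pow 2) (fun t => sq_nonneg _)
    (fun t => pow_le_one₀ (g0 t) (g1 t)) (fun t ht => by simp [gz t ht])
    (fun t ht => by simp [go t ht])
  refine ⟨_, g, _, cg, a1, b1, fun t ht => ⟨a2 t ht, b2 t ht⟩, fun t ht => ?_⟩
  exact ⟨(a3 t ht).1, (a3 t ht).2.1, (a3 t ht).2.2, (b3 t ht).1, (b3 t ht).2.1, (b3 t ht).2.2⟩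

lemma exists_bump {A B : ℝ} (h : A < B) : ∃ w : ℝ → ℝ, ContDiff ℝ 1 w ∧ (∀ s, 0 ≤ w s) ∧
    (∀ s, w s ≤ 1) ∧ (∀ s, w s ≠ 0 ↔ A < s ∧ s < B) := by
  let β : ContDiffBump ((A + B) / 2) := ⟨(B - A) / 4, (B - A) / 2, by linarith, by linarith⟩
  refine ⟨β, β.contDiff, fun s => β.nonneg, fun s => β.le_one, fun s => ?_⟩
  rw [← Function.mem_support, β.support_eq, Real.ball_eq_Ioo, mem_Ioo]
  simp only [β]
  constructor <;> rintro ⟨h1, h2⟩ <;> constructor <;> linarith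

lemma integrable_wPhi {N : ℕ} {Ω : Set (Euc N)} (hΩ : IsConeDomain N Ω) {lam1 : ℝ}
    {φ : Euc N → ℝ} (hphi : DirichletEigenpair N Ω lam1 φ) {w : ℝ → ℝ} {b : ℝ} (hb : 0 < b)
    (hw : Continuous w) (hw0 : ∀ s, 0 ≤ w s) (hw1 : ∀ s, w s ≤ 1)
    (hsupp : ∀ s, w s ≠ 0 → s ≤ b ^ 2) {F : ℝ → ℝ}
    (hF : Continuous F) (hF1 : ∀ t, 0 ≤ t → t ≤ 1 → |F t| ≤ 1) :
    Integrable fun x => w (‖x‖ ^ 2) * F (Phi N Ω φ x) := by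
  have hm : AEMeasurable (Phi N Ω φ) (volume : Measure (Euc N)) := by
    refine (AEStronglyMeasurable.aemeasurable ?_)
    unfold Phi
    rw [aestronglyMeasurable_indicator_iff (isOpen_cone hΩ).measurableSet]
    exact hphi.smoothExt.continuousOn.aestronglyMeasurable (isOpen_cone hΩ).measurableSet
  have hm2 : AEStronglyMeasurable (fun x => w (‖x‖ ^ 2) * F (Phi N Ω φ x))
      (volume : Measure (Euc N)) :=
    (Continuous.aestronglyMeasurable (by fun_prop)).mul
      (hF.measurable.comp_aemeasurable hm).aestronglyMeasurable
  have hb' : Integrable ((Metric.closedBall (0 : Euc N) b).indicator fun _ => (1:ℝ)) :=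
    (integrable_indicator_iff measurableSet_closedBall).2
      (integrableOn_const (isCompact_closedBall _ _).measure_lt_top.ne)
  refine hb'.mono' hm2 (Filter.Eventually.of_forall fun x => ?_)
  by_cases hx : x ∈ Metric.closedBall (0 : Euc N) b
  · rw [indicator_of_mem hx, norm_mul]
    refine mul_le_one₀ ?_ (norm_nonneg _) (hF1 _ (Phi_nonneg hphi x) (Phi_le_one hphi x))
    rw [Real.norm_of_nonneg (hw0 _)]; exact hw1 _
  · have : w (‖x‖ ^ 2) = 0 := by
      by_contra h
      apply hx
      have := hsupp _ h
      rw [mem_closedBall_zero_iff]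
      exact le_of_sq_le_sq this hb.le
    rw [this, indicator_of_notMem hx]; simp

lemma exists_weight {N : ℕ} {Ω : Set (Euc N)} (hΩ : IsConeDomain N Ω) {lam1 : ℝ}
    {φ : Euc N → ℝ} (hphi : DirichletEigenpair N Ω lam1 φ) {κ a b : ℝ} (hκ : 0 < κ)
    (ha : 0 < a) (hab : a < b) :
    ∃ (w f g h : ℝ → ℝ) (ε M : ℝ), 0 < ε ∧ 0 < M ∧ ContDiff ℝ 1 w ∧ (∀ s, 0 ≤ w s) ∧
      (∀ s, w s ≤ M) ∧ (∀ s, w s ≠ 0 → a ^ 2 ≤ s ∧ s ≤ b ^ 2) ∧ Continuous g ∧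
      (∀ t, HasDerivAt f (g t) t) ∧ (∀ t, HasDerivAt h (g t ^ 2) t) ∧
      (∀ t ≤ ε, f t = 0 ∧ h t = 0) ∧ (∀ t, 0 ≤ t → t ≤ 1 → f t ^ 2 ≤ 1) ∧
      (∫ x, w (‖x‖ ^ 2) * f (Phi N Ω φ x) ^ 2) = 1 ∧
      lam1 * (∫ x, w (‖x‖ ^ 2) * h (Phi N Ω φ x) * Phi N Ω φ x) ≤ lam1 + κ := by
  have hb : 0 < b := ha.trans hab
  have hab2 : a ^ 2 < b ^ 2 := by nlinarith
  obtain ⟨w, cw, w0, w1, ws⟩ := exists_bump hab2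
  have wsb : ∀ s, w s ≠ 0 → s ≤ b ^ 2 := fun s hs => ((ws s).1 hs).2.le
  have I : ∀ F : ℝ → ℝ, Continuous F → (∀ t, 0 ≤ t → t ≤ 1 → |F t| ≤ 1) →
      Integrable fun x => w (‖x‖ ^ 2) * F (Phi N Ω φ x) := fun F hF hF1 =>
    integrable_wPhi hΩ hphi hb cw.continuous w0 w1 wsb hF hF1
  have I1 := I (fun t => t) continuous_id (fun t h0 h1 => by rwa [abs_of_nonneg h0])
  have I2 := I (fun t => t ^ 2) (by fun_prop) (fun t h0 h1 => by
    rw [abs_of_nonneg (sq_nonneg t)]; exact pow_le_one₀ h0 h1)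
  set M1 := ∫ x, w (‖x‖ ^ 2) * Phi N Ω φ x with hM1
  set M2 := ∫ x, w (‖x‖ ^ 2) * Phi N Ω φ x ^ 2 with hM2
  have M1n : 0 ≤ M1 := integral_nonneg fun x => mul_nonneg (w0 _) (Phi_nonneg hphi x)
  have M2p : 0 < M2 := by
    rw [hM2, integral_pos_iff_support_of_nonneg (fun x => mul_nonneg (w0 _) (sq_nonneg _)) I2]
    have hop : IsOpen (cone N Ω ∩ {x : Euc N | a ^ 2 < ‖x‖ ^ 2 ∧ ‖x‖ ^ 2 < b ^ 2}) :=
      (isOpen_cone hΩ).inter (isOpen_Ioo.preimage (by fun_prop : Continuous fun x : Euc N => ‖x‖ ^ 2))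
    have hne : (cone N Ω ∩ {x : Euc N | a ^ 2 < ‖x‖ ^ 2 ∧ ‖x‖ ^ 2 < b ^ 2}).Nonempty := by
      obtain ⟨ω, hω⟩ := hΩ.2.1.nonempty
      have hn : ‖ω‖ = 1 := by simpa using hΩ.1 hω
      have hω0 : ω ≠ 0 := by rw [← norm_pos_iff, hn]; norm_num
      have hp : 0 < (a + b) / 2 := by linarith
      refine ⟨((a + b) / 2) • ω, (smul_mem_cone hp ω).2 ⟨hω0, by simpa [hn] using hω⟩, ?_⟩
      rw [mem_ofPred_eq, norm_smul, hn, mul_one, Real.norm_of_nonneg hp.le]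
      constructor <;> nlinarith
    refine (hop.measure_pos volume hne).trans_le (measure_mono ?_)
    rintro x ⟨h1, h2⟩
    rw [Function.mem_support]
    exact mul_ne_zero ((ws _).2 h2) (pow_ne_zero _ (Phi_pos hphi h1).ne')
  set ε := κ * M2 / (4 * (|lam1| + κ) * M1 + 4 * M1 + 1) / 2 with hεd
  have hden : 0 < 4 * (|lam1| + κ) * M1 + 4 * M1 + 1 := by positivity
  have hε : 0 < ε := by positivity
  have hε2 : 4 * ε * M1 * (|lam1| + κ) ≤ κ * M2 / 2 := by
    have : ε * (4 * (|lam1| + κ) * M1 + 4 * M1 + 1) = κ * M2 / 2 := by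
      rw [hεd]; field_simp
    nlinarith [mul_nonneg hε.le M1n]
  obtain ⟨f, g, h, cg, df, dh, fz, fb⟩ := exists_fgh hε
  have cf : Continuous f := continuous_iff_continuousAt.2 fun t => (df t).continuousAt
  have ch : Continuous h := continuous_iff_continuousAt.2 fun t => (dh t).continuousAt
  have I3 := I (fun t => f t ^ 2) (cf.pow 2) (fun t h0 h1 => by
    obtain ⟨k1, k2, -⟩ := fb t h0
    rw [abs_of_nonneg (sq_nonneg _)]; exact pow_le_one₀ k1 (k2.trans h1))
  have I4 := I (fun t => h t * t) (ch.mul continuous_id) (fun t h0 h1 => by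
    obtain ⟨-, -, -, k1, k2, -⟩ := fb t h0
    rw [abs_of_nonneg (mul_nonneg k1 h0)]; exact mul_le_one₀ (k2.trans h1) h0 h1)
  set A0 := ∫ x, w (‖x‖ ^ 2) * f (Phi N Ω φ x) ^ 2 with hA0
  set H0 := ∫ x, w (‖x‖ ^ 2) * (h (Phi N Ω φ x) * Phi N Ω φ x) with hH0
  have A0l : M2 - 4 * ε * M1 ≤ A0 := by
    rw [hM2, hM1, hA0, ← integral_const_mul, ← integral_sub I2 (I1.const_mul _)]
    refine integral_mono (I2.sub (I1.const_mul _)) I3 fun x => ?_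
    have := w0 (‖x‖ ^ 2)
    have hP := Phi_nonneg hphi x
    obtain ⟨k1, k2, k3, -⟩ := fb _ hP
    simp only [Pi.sub_apply]
    have k : Phi N Ω φ x ^ 2 - 4 * ε * Phi N Ω φ x ≤ f (Phi N Ω φ x) ^ 2 := by
      rcases le_total (Phi N Ω φ x) (2 * ε) with hh | hh <;> nlinarith
    nlinarith [mul_le_mul_of_nonneg_left k this]
  have A0u : A0 ≤ M2 := by
    refine integral_mono I3 I2 fun x => ?_
    obtain ⟨k1, k2, k3, -⟩ := fb _ (Phi_nonneg hphi x)
    exact mul_le_mul_of_nonneg_left (pow_le_pow_left₀ k1 k2 2) (w0 _)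
  have H0l : M2 - 4 * ε * M1 ≤ H0 := by
    rw [hM2, hM1, hH0, ← integral_const_mul, ← integral_sub I2 (I1.const_mul _)]
    refine integral_mono (I2.sub (I1.const_mul _)) I4 fun x => ?_
    have := w0 (‖x‖ ^ 2)
    have hP := Phi_nonneg hphi x
    obtain ⟨-, -, -, k1, k2, k3⟩ := fb _ hP
    simp only [Pi.sub_apply]
    have k : Phi N Ω φ x ^ 2 - 4 * ε * Phi N Ω φ x ≤ h (Phi N Ω φ x) * Phi N Ω φ x := by
      nlinarith
    nlinarith [mul_le_mul_of_nonneg_left k this]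
  have H0u : H0 ≤ M2 := by
    refine integral_mono I4 I2 fun x => ?_
    have hP := Phi_nonneg hphi x
    obtain ⟨-, -, -, k1, k2, k3⟩ := fb _ hP
    refine mul_le_mul_of_nonneg_left ?_ (w0 _)
    simp only [sq]
    exact mul_le_mul_of_nonneg_right k2 hP
  have A0p : 0 < A0 := by
    have : 4 * ε * M1 * κ ≤ κ * M2 / 2 := by
      have : 0 ≤ 4 * ε * M1 * |lam1| := by positivity
      linarith
    nlinarith
  have fin : lam1 * H0 ≤ (lam1 + κ) * A0 := by
    have e : lam1 * (H0 - A0) ≤ |lam1| * (4 * ε * M1) := by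
      refine (le_abs_self _).trans ?_
      rw [abs_mul]
      refine mul_le_mul_of_nonneg_left ?_ (abs_nonneg _)
      rw [abs_le]; constructor <;> linarith
    nlinarith
  refine ⟨fun s => A0⁻¹ * w s, f, g, h, ε, A0⁻¹, hε, by positivity, contDiff_const.mul cw,
    fun s => mul_nonneg (by positivity) (w0 s),
    fun s => mul_le_of_le_one_right (by positivity) (w1 s), ?_, cg, df, dh, fz, ?_, ?_, ?_⟩
  · intro s hs
    obtain ⟨h1, h2⟩ := (ws s).1 (right_ne_zero_of_mul hs)
    exact ⟨h1.le, h2.le⟩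
  · intro t h0 h1
    obtain ⟨k1, k2, -⟩ := fb t h0
    exact pow_le_one₀ k1 (k2.trans h1)
  · simp only [mul_assoc]
    rw [integral_const_mul, ← hA0, inv_mul_cancel₀ A0p.ne']
  · simp only [mul_assoc]
    rw [integral_const_mul, ← hH0]
    rw [← mul_assoc, mul_comm lam1, mul_assoc, inv_mul_le_iff₀ A0p]
    linarith

/-! ### Pointwise and integral estimates -/

lemma log_lap {N : ℕ} {U : Set (Euc N)} (hU : IsOpen U) {u : Euc N → ℝ}
    (hu : ContDiffOn ℝ 2 u U) (hpos : ∀ x ∈ U, 0 < u x) {x : Euc N} (hx : x ∈ U) :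
    ∑ i, pd i (pd i fun y => log (u y)) x +
      ∑ i, pd i (fun y => log (u y)) x * pd i (fun y => log (u y)) x = lap N u x / u x := by
  have hd : ∀ y ∈ U, DifferentiableAt ℝ u y := fun y hy =>
    (hu.contDiffAt (hU.mem_nhds hy)).differentiableAt (by norm_num)
  have hd2 : DifferentiableAt ℝ (fderiv ℝ u) x :=
    ((hu.fderiv_of_isOpen hU (m := 1) (by norm_num)).contDiffAt
      (hU.mem_nhds hx)).differentiableAt (by simp)
  have h1 : ∀ i, ∀ y ∈ U, pd i (fun y => log (u y)) y = (u y)⁻¹ * pd i u y := fun i y hy =>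
    pd_comp (hd y hy) (hasDerivAt_log (hpos y hy).ne') i
  have hx0 := (hpos x hx).ne'
  have h2 : ∀ i, pd i (pd i fun y => log (u y)) x =
      -(u x ^ 2)⁻¹ * pd i u x * pd i u x + (u x)⁻¹ * pd i (pd i u) x := by
    intro i
    have e : (pd i fun y => log (u y)) =ᶠ[nhds x] fun y => (u y)⁻¹ * pd i u y := by
      filter_upwards [hU.mem_nhds hx] with y hy using h1 i y hy
    have hdi : DifferentiableAt ℝ (pd i u) x :=
      ((contDiffOn_pd hU hu (m := 1) (by norm_num) i).contDiffAt
        (hU.mem_nhds hx)).differentiableAt (by simp)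
    rw [pd_congr i e, pd_mul (a := fun y => (u y)⁻¹) ((hd x hx).inv hx0) hdi i,
      pd_comp (f := fun s => s⁻¹) (hd x hx) (hasDerivAt_inv hx0) i]
  rw [lap_eq_sum_pd hd2, ← Finset.sum_add_distrib, Finset.sum_div]
  refine Finset.sum_congr rfl fun i _ => ?_
  rw [h2 i, h1 i x hx]
  field_simp
  ring

lemma conv_lower {N : ℕ} (hN : 2 ≤ N) {Ω : Set (Euc N)} (hΩ : IsConeDomain N Ω) {α ρ : ℝ}
    (hα : 0 ≤ α) (hρ : 0 < ρ) {v ζ : Euc N → ℝ} {S : Set (Euc N)} (hS : IsCompact S)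
    (hSU : S ⊆ coneGT N ρ Ω) (hv : ContinuousOn v S) (hv0 : ∀ y ∈ coneGT N ρ Ω, 0 ≤ v y)
    (hζ : ContinuousOn ζ S) (hζ0 : ∀ y, 0 ≤ ζ y) (hz : ∀ y ∉ S, ζ y = 0) {M R : ℝ}
    (hM : 0 < M) (hζM : ∀ y, ζ y ≤ M) {x : Euc N} (hR : ∀ y ∈ S, ‖x - y‖ ≤ R) (hR0 : 0 < R)
    (hfin : rieszConv N α ρ Ω v x < ⊤) :
    R ^ (-α) / M * (∫ y, ζ y * v y) ≤ (rieszConv N α ρ Ω v x).toReal := by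
  haveI : Nonempty (Fin N) := ⟨⟨0, by omega⟩⟩
  haveI : Nontrivial (Euc N) := inferInstance
  have hRp : 0 < R ^ (-α) := rpow_pos_of_pos hR0 _
  have hnn : ∀ y, 0 ≤ R ^ (-α) / M * (ζ y * v y) := by
    intro y
    by_cases hy : y ∈ S
    · have := hv0 y (hSU hy)
      have := hζ0 y
      positivity
    · simp [hz y hy]
  have hint : Integrable fun y => R ^ (-α) / M * (ζ y * v y) :=
    (integrable_of_compact hS (hζ.mul hv) fun y hy => by simp [hz y hy]).const_mul _
  rw [← integral_const_mul, ← ENNReal.ofReal_le_iff_le_toReal hfin.ne,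
    ofReal_integral_eq_lintegral_ofReal hint (Filter.Eventually.of_forall hnn), rieszConv,
    ← lintegral_indicator (isOpen_coneGT hΩ hρ).measurableSet]
  have hne : ∀ᵐ y : Euc N, y ≠ x := by
    simp [ae_iff]
  refine lintegral_mono_ae ?_
  filter_upwards [hne] with y hyx
  by_cases hy : y ∈ S
  · rw [indicator_of_mem (hSU hy)]
    apply ENNReal.ofReal_le_ofReal
    have h1 : R ^ (-α) ≤ ‖x - y‖ ^ (-α) :=
      rpow_le_rpow_of_nonpos (norm_pos_iff.2 (sub_ne_zero.2 hyx.symm)) (hR y hy) (by linarith)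
    have h2 := hv0 y (hSU hy)
    have h3 : ζ y / M ≤ 1 := (div_le_one hM).2 (hζM y)
    have h4 : 0 ≤ ζ y / M := div_nonneg (hζ0 y) hM.le
    calc R ^ (-α) / M * (ζ y * v y) = (ζ y / M) * (v y * R ^ (-α)) := by ring
      _ ≤ 1 * (v y * R ^ (-α)) := mul_le_mul_of_nonneg_right h3 (by positivity)
      _ = v y * R ^ (-α) := one_mul _
      _ ≤ _ := mul_le_mul_of_nonneg_left h1 h2
  · simp [hz y hy]

lemma jensen_exp {N : ℕ} {ζ l : Euc N → ℝ} {S : Set (Euc N)} (hS : IsCompact S)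
    (hζ : ContinuousOn ζ S) (hl : ContinuousOn l S) (hζ0 : ∀ y, 0 ≤ ζ y)
    (hz : ∀ y ∉ S, ζ y = 0) (h1 : ∫ y, ζ y = 1) (s : ℝ) :
    exp (s * ∫ y, ζ y * l y) ≤ ∫ y, ζ y * exp (s * l y) := by
  set m := ∫ y, ζ y * l y with hm
  have I0 : Integrable ζ := integrable_of_compact hS hζ hz
  have I1 : Integrable fun y => ζ y * l y :=
    integrable_of_compact hS (hζ.mul hl) fun y hy => by simp [hz y hy]
  have I2 : Integrable fun y => ζ y * exp (s * l y) :=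
    integrable_of_compact hS (hζ.mul (continuousOn_const.mul hl).rexp)
      fun y hy => by simp [hz y hy]
  have e : ∫ y, (exp (s * m) * (1 - s * m) * ζ y + exp (s * m) * s * (ζ y * l y))
      = exp (s * m) := by
    rw [integral_add (I0.const_mul _) (I1.const_mul _), integral_const_mul, integral_const_mul,
      h1, ← hm]
    ring
  rw [← e]
  refine integral_mono ((I0.const_mul _).add (I1.const_mul _)) I2 fun y => ?_
  have h2 : exp (s * m) * (1 + (s * l y - s * m)) ≤ exp (s * l y) := by
    have h3 := add_one_le_exp (s * l y - s * m)
    calc exp (s * m) * (1 + (s * l y - s * m)) ≤ exp (s * m) * exp (s * l y - s * m) :=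
          mul_le_mul_of_nonneg_left (by linarith) (exp_pos _).le
      _ = exp (s * l y) := by rw [← exp_add]; congr 1; ring
  have := mul_le_mul_of_nonneg_left h2 (hζ0 y)
  simp only
  linarith

lemma variance_nonneg' {N : ℕ} {ζ l : Euc N → ℝ} {S : Set (Euc N)} (hS : IsCompact S)
    (hζ : ContinuousOn ζ S) (hl : ContinuousOn l S) (hζ0 : ∀ y, 0 ≤ ζ y)
    (hz : ∀ y ∉ S, ζ y = 0) (h1 : ∫ y, ζ y = 1) :
    (∫ y, ζ y * l y) ^ 2 ≤ ∫ y, ζ y * l y ^ 2 := by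
  set m := ∫ y, ζ y * l y with hm
  have I0 : Integrable ζ := integrable_of_compact hS hζ hz
  have I1 : Integrable fun y => ζ y * l y :=
    integrable_of_compact hS (hζ.mul hl) fun y hy => by simp [hz y hy]
  have I2 : Integrable fun y => ζ y * l y ^ 2 :=
    integrable_of_compact hS (hζ.mul (hl.pow 2)) fun y hy => by simp [hz y hy]
  have e : ∫ y, (2 * m * (ζ y * l y) + -(m ^ 2) * ζ y) = m ^ 2 := by
    rw [integral_add (I1.const_mul _) (I0.const_mul _), integral_const_mul, integral_const_mul,
      h1, ← hm]
    ring
  rw [← e]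
  refine integral_mono ((I1.const_mul _).add (I0.const_mul _)) I2 fun y => ?_
  have := mul_nonneg (hζ0 y) (sq_nonneg (l y - m))
  simp only
  linarith

/-- The inequality obtained by testing `(E)` in one annulus. -/
lemma slice {N : ℕ} (hN : 2 ≤ N) {Ω : Set (Euc N)} (hΩ : IsConeDomain N Ω)
    {lam1 : ℝ} {φ : Euc N → ℝ} (hphi : DirichletEigenpair N Ω lam1 φ)
    {α p q ρ μ : ℝ} (hα : 0 ≤ α) (hρ : 0 < ρ)
    {u : Euc N → ℝ} (hu : IsPosSolE N ρ μ α p q Ω u)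
    {w f g h : ℝ → ℝ} {ε M a b : ℝ} (ha : ρ < a) (hab : a < b) (hε : 0 < ε) (hM : 0 < M)
    (cw : ContDiff ℝ 1 w)
    (w0 : ∀ s, 0 ≤ w s) (wM : ∀ s, w s ≤ M) (ws : ∀ s, w s ≠ 0 → a ^ 2 ≤ s ∧ s ≤ b ^ 2)
    (cg : Continuous g) (df : ∀ t, HasDerivAt f (g t) t) (dh : ∀ t, HasDerivAt h (g t ^ 2) t)
    (fz : ∀ t ≤ ε, f t = 0 ∧ h t = 0) (f1 : ∀ t, 0 ≤ t → t ≤ 1 → f t ^ 2 ≤ 1)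
    (hint : (∫ x, w (‖x‖ ^ 2) * f (Phi N Ω φ x) ^ 2) = 1) :
    ((∫ x, w (‖x‖ ^ 2) * f (Phi N Ω φ x) ^ 2 *
        fderiv ℝ (fun y => fderiv ℝ (fun z => log (u z)) y y) x x)
      + ((N : ℝ) - 2) * (∫ x, w (‖x‖ ^ 2) * f (Phi N Ω φ x) ^ 2 *
          fderiv ℝ (fun z => log (u z)) x x)
      + (∫ x, w (‖x‖ ^ 2) * f (Phi N Ω φ x) ^ 2 * fderiv ℝ (fun z => log (u z)) x x) ^ 2
      + μ + (2 * b) ^ (-α) / M * a ^ 2 * exp ((p + q - 1) *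
          ∫ x, w (‖x‖ ^ 2) * f (Phi N Ω φ x) ^ 2 * log (u x))
      ≤ lam1 * (∫ x, w (‖x‖ ^ 2) * h (Phi N Ω φ x) * Phi N Ω φ x)) ∧
    ∀ x ∈ coneGT N ρ Ω, ∀ R, ‖x‖ + b ≤ R → R ^ (-α) / M * exp (p *
          ∫ x, w (‖x‖ ^ 2) * f (Phi N Ω φ x) ^ 2 * log (u x)) ≤
        (rieszConv N α ρ Ω (fun y => u y ^ p) x).toReal := by
  obtain ⟨cu, -, upos, hfin, heq⟩ := hu
  have ha0 : 0 < a := hρ.trans ha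
  have hb0 : 0 < b := ha0.trans hab
  set U := coneGT N ρ Ω with hUd
  set S := trunc N Ω φ ε a b with hSd
  have hU : IsOpen U := isOpen_coneGT hΩ hρ
  have hS : IsCompact S := trunc_compact hphi ha0
  have hUc : U ⊆ cone N Ω := by rw [hUd, coneGT_eq hρ]; exact inter_subset_left
  have h0U : (0 : Euc N) ∉ U := fun h => (hUc h).1 rfl
  have hSU : S ⊆ U := by
    intro x hx
    rw [hUd, coneGT_eq hρ]
    exact ⟨trunc_subset hphi ha0 hε hx, ha.trans_le hx.1⟩
  have hΦ : ContDiffOn ℝ 2 (Phi N Ω φ) U := (Phi_contDiffOn hphi).mono hUc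
  have hl : ContDiffOn ℝ 2 (fun z => log (u z)) U := cu.log fun x hx => (upos x hx).ne'
  have cf : Continuous f := continuous_iff_continuousAt.2 fun t => (df t).continuousAt
  have hsupp : ∀ x ∉ S, w (‖x‖ ^ 2) = 0 ∨ (f (Phi N Ω φ x) = 0 ∧ h (Phi N Ω φ x) = 0) := by
    intro x hx
    by_cases hw : w (‖x‖ ^ 2) = 0
    · exact Or.inl hw
    · obtain ⟨h1, h2⟩ := ws _ hw
      exact Or.inr (fz _ (Phi_lt_of_notMem_trunc hε hx (le_of_sq_le_sq h1 (norm_nonneg _))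
        (le_of_sq_le_sq h2 hb0.le)).le)
  set ζ : Euc N → ℝ := fun x => w (‖x‖ ^ 2) * f (Phi N Ω φ x) ^ 2 with hζd
  have cζ : ContinuousOn ζ S := by
    refine ContinuousOn.mul ?_ ?_
    · exact (cw.continuous.comp (by fun_prop : Continuous fun x : Euc N => ‖x‖ ^ 2)).continuousOn
    · exact (cf.comp_continuousOn (hΦ.continuousOn.mono hSU)).pow 2
  have ζ0 : ∀ x, 0 ≤ ζ x := fun x => mul_nonneg (w0 _) (sq_nonneg _)
  have ζz : ∀ x ∉ S, ζ x = 0 := by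
    intro x hx
    rcases hsupp x hx with h | h <;> simp [hζd, h]
  have ζM : ∀ x, ζ x ≤ M := fun x =>
    (mul_le_of_le_one_right (w0 _) (f1 _ (Phi_nonneg hphi x) (Phi_le_one hphi x))).trans (wM _)
  have cl : ContinuousOn (fun z => log (u z)) S := hl.continuousOn.mono hSU
  have cD : ContinuousOn (fun x => fderiv ℝ (fun z => log (u z)) x x) S :=
    ((contDiffOn_euler hU hl (m := 1) (by norm_num)).continuousOn).mono hSU
  have upow : ∀ x ∈ U, ∀ s : ℝ, u x ^ s = exp (s * log (u x)) := fun x hx s => by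
    rw [rpow_def_of_pos (upos x hx), mul_comm]
  have cup : ContinuousOn (fun y => u y ^ p) S :=
    (cu.continuousOn.mono hSU).rpow_const fun x hx => Or.inl (upos x (hSU hx)).ne'
  set Y := ∫ x, ζ x * log (u x) with hYd
  have J1 : ∀ s : ℝ, exp (s * Y) ≤ ∫ x, ζ x * exp (s * log (u x)) := fun s =>
    jensen_exp hS cζ cl ζ0 ζz hint s
  have J2 : exp (p * Y) ≤ ∫ x, ζ x * u x ^ p := by
    refine (J1 p).trans (le_of_eq (integral_congr_ae (Filter.Eventually.of_forall fun x => ?_)))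
    by_cases hx : x ∈ S
    · simp only [upow x (hSU hx)]
    · simp [ζz x hx]
  have conv : ∀ x ∈ U, ∀ R, ‖x‖ + b ≤ R → R ^ (-α) / M * (∫ y, ζ y * u y ^ p) ≤
      (rieszConv N α ρ Ω (fun y => u y ^ p) x).toReal := by
    intro x hx R hR
    refine conv_lower hN hΩ hα hρ hS hSU cup (fun y hy => rpow_nonneg (upos y hy).le _) cζ ζ0 ζz
      hM ζM (fun y hy => ?_) (by linarith [norm_nonneg x]) (hfin x hx)
    have := hy.2.1
    linarith [norm_sub_le x y]
  refine ⟨?_, fun x hx R hR => le_trans ?_ (conv x hx R hR)⟩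
  swap
  · have : 0 < R := by linarith [norm_nonneg x]
    exact mul_le_mul_of_nonneg_left J2 (by positivity)
  set J := (2 * b) ^ (-α) / M * (∫ y, ζ y * u y ^ p) with hJ
  have hJ0 : (2 * b) ^ (-α) / M * exp (p * Y) ≤ J :=
    mul_le_mul_of_nonneg_left J2 (by positivity)
  have Jn : 0 ≤ J := le_trans (by positivity) hJ0
  have key := static_ineq (μ := μ) hU h0U hS hSU
    (fun x => J * a ^ 2 * exp ((q - 1) * log (u x))) hΦ hl cw w0 cg df dh hsupp
    (fun x hx => Phi_rad hΩ hphi (hUc hx)) (fun x hx => Phi_eig hΩ hphi (hUc hx))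
    (continuousOn_const.mul (continuousOn_const.mul cl).rexp) (by
      intro x hx
      have hxU := hSU hx
      have hx0 := upos x hxU
      have hn : 0 < ‖x‖ := ha0.trans_le hx.1
      rw [log_lap hU cu upos hxU]
      have h1 := heq x hxU
      have h2 : J ≤ (rieszConv N α ρ Ω (fun y => u y ^ p) x).toReal :=
        conv x hxU (2 * b) (by linarith [hx.2.1])
      have h3 : u x ^ q = exp ((q - 1) * log (u x)) * u x := by
        rw [← upow x hxU, rpow_sub_one hx0.ne']
        field_simp
      set E := exp ((q - 1) * log (u x)) with hE
      have hEp : 0 < E := exp_pos _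
      have h4 : J * (E * u x) ≤ -lap N u x - μ * ‖x‖ ^ (-(2:ℝ)) * u x := by
        refine le_trans ?_ h1
        rw [h3]
        exact mul_le_mul_of_nonneg_right h2 (by positivity)
      have h5 : lap N u x / u x ≤ -μ * ‖x‖ ^ (-(2:ℝ)) - J * E := by
        rw [div_le_iff₀ hx0]
        linarith
      have h6 := mul_le_mul_of_nonneg_left h5 (sq_nonneg ‖x‖)
      have h7 := rpow_neg_two_mul hn
      have h8 : a ^ 2 ≤ ‖x‖ ^ 2 := pow_le_pow_left₀ ha0.le hx.1 2
      have h9 : J * E * a ^ 2 ≤ J * E * ‖x‖ ^ 2 :=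
        mul_le_mul_of_nonneg_left h8 (by positivity)
      have h10 : ‖x‖ ^ 2 * (-μ * ‖x‖ ^ (-(2:ℝ)) - J * E) = -μ - J * E * ‖x‖ ^ 2 := by
        linear_combination (-μ) * h7
      linarith)
  have hV := variance_nonneg' hS cζ cD ζ0 ζz hint
  have hPint : (2 * b) ^ (-α) / M * a ^ 2 * exp ((p + q - 1) * Y) ≤
      ∫ x, ζ x * (J * a ^ 2 * exp ((q - 1) * log (u x))) := by
    have e : ∫ x, ζ x * (J * a ^ 2 * exp ((q - 1) * log (u x))) =
        J * a ^ 2 * ∫ x, ζ x * exp ((q - 1) * log (u x)) := by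
      rw [← integral_const_mul]
      congr 1
      ext x
      ring
    rw [e]
    have hs : (p + q - 1) * Y = p * Y + (q - 1) * Y := by ring
    rw [hs, exp_add]
    calc (2 * b) ^ (-α) / M * a ^ 2 * (exp (p * Y) * exp ((q - 1) * Y))
        = ((2 * b) ^ (-α) / M * exp (p * Y)) * a ^ 2 * exp ((q - 1) * Y) := by ring
      _ ≤ J * a ^ 2 * exp ((q - 1) * Y) := by gcongr
      _ ≤ _ := mul_le_mul_of_nonneg_left (J1 _) (by positivity)
  rw [hint] at key
  linarith

lemma coneGT_nonempty {N : ℕ} {Ω : Set (Euc N)} (hΩ : IsConeDomain N Ω) {ρ : ℝ} (hρ : 0 < ρ) :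
    (coneGT N ρ Ω).Nonempty := by
  obtain ⟨ω, hω⟩ := hΩ.2.1.nonempty
  have hn : ‖ω‖ = 1 := by simpa using hΩ.1 hω
  have hω0 : ω ≠ 0 := by rw [← norm_pos_iff, hn]; norm_num
  have ha0 : 0 < ρ + 1 := by linarith
  refine ⟨(ρ + 1) • ω, ?_⟩
  rw [coneGT_eq hρ]
  refine ⟨(smul_mem_cone ha0 ω).2 ⟨hω0, by simpa [hn] using hω⟩, ?_⟩
  have : ρ < ‖(ρ + 1) • ω‖ := by
    rw [norm_smul, hn, mul_one, Real.norm_of_nonneg ha0.le]; linarith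
  exact this

set_option maxHeartbeats 2000000 in
/-- if `μ ≤ C_{H,Ω}` and `(p+q-1)·|γ_*| < N - α + 2` then `(E)` has no
positive solution. -/
theorem no_solution_of_pq_subcritical
    (N : ℕ) (hN : 2 ≤ N) (Ω : Set (Euc N)) (hΩ : IsConeDomain N Ω)
    (lam1 : ℝ) (φ : Euc N → ℝ) (hphi : DirichletEigenpair N Ω lam1 φ)
    (α p q ρ μ : ℝ) (hα : 0 ≤ α) (hαN : α < N) (hp : 0 < p) (hq : 0 < q) (hρ : 0 < ρ)
    (hμ : μ ≤ CHconst N lam1)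
    (hcrit : (p + q - 1) * (-(gammaStar N lam1 μ)) < (N : ℝ) - α + 2) :
    ¬ ∃ u : Euc N → ℝ, IsPosSolE N ρ μ α p q Ω u := by
  rintro ⟨u, hu⟩
  set k : ℝ := ((N : ℝ) - 2) / 2 with hk
  set D0 : ℝ := k ^ 2 + lam1 - μ with hD0
  set β : ℝ := (N : ℝ) - α + 2 with hβd
  set θ : ℝ := p + q - 1 with hθ
  have hβ : 0 < β := by linarith
  have D0n : 0 ≤ D0 := by
    unfold CHconst at hμ
    rw [← hk] at hμ
    linarith
  have hgam : -(gammaStar N lam1 μ) = k + √D0 := by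
    have e : ((N : ℝ) - 2) ^ 2 + 4 * (lam1 - μ) = 2 ^ 2 * D0 := by rw [hD0, hk]; ring
    rw [gammaStar, e, Real.sqrt_mul (by norm_num), Real.sqrt_sq (by norm_num), hk]
    ring
  rw [hgam] at hcrit
  set δ : ℝ := (β - θ * (k + √D0)) / (2 * (|θ| + 1)) with hδd
  have hθ1 : 0 < |θ| + 1 := by positivity
  have hδ : 0 < δ := div_pos (by linarith) (by linarith)
  have hδ2 : δ * (2 * (|θ| + 1)) = β - θ * (k + √D0) := by
    rw [hδd]; field_simp
  set σ : ℝ := √D0 + δ with hσd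
  have hσ : 0 < σ := by have := Real.sqrt_nonneg D0; linarith
  have hκ : 0 < σ ^ 2 - D0 := by
    have h1 := Real.sqrt_nonneg D0
    have h2 := Real.sq_sqrt D0n
    rw [hσd]
    nlinarith [mul_nonneg h1 hδ.le]
  have hθσ : θ * (k + σ) < β := by
    have h1 : θ * δ ≤ |θ| * δ := mul_le_mul_of_nonneg_right (le_abs_self θ) hδ.le
    rw [hσd]
    nlinarith [mul_nonneg (abs_nonneg θ) hδ.le]
  have ha0 : 0 < ρ + 1 := by linarith
  have hab : ρ + 1 < ρ + 2 := by linarith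
  set a : ℝ := ρ + 1 with had
  set b : ℝ := ρ + 2 with hbd
  have hb0 : 0 < b := ha0.trans hab
  obtain ⟨w, f, g, h, ε, M, hε, hM, cw, w0, wM, ws, cg, df, dh, fz, f1, hint, hlam⟩ :=
    exists_weight hΩ hphi hκ ha0 hab
  have cf : Continuous f := continuous_iff_continuousAt.2 fun t => (df t).continuousAt
  set U := coneGT N ρ Ω with hUd
  set S := trunc N Ω φ ε a b with hSd
  have hU : IsOpen U := isOpen_coneGT hΩ hρ
  have hS : IsCompact S := trunc_compact hphi ha0
  have hSU : ∀ t : ℝ, 0 ≤ t → ∀ x ∈ S, exp t • x ∈ U := by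
    intro t ht x hx
    rw [hUd, coneGT_eq hρ]
    refine ⟨(smul_mem_cone (exp_pos t) x).2 (trunc_subset hphi ha0 hε hx), ?_⟩
    have h1 : ‖exp t • x‖ = exp t * ‖x‖ := by
      rw [norm_smul, Real.norm_of_nonneg (exp_pos t).le]
    have h2 : 1 ≤ exp t := one_le_exp ht
    have h3 : a ≤ ‖x‖ := hx.1
    have h4 : ρ < exp t * ‖x‖ := by nlinarith
    rw [← h1] at h4
    exact h4
  have hSC : S ⊆ cone N Ω := trunc_subset hphi ha0 hε
  set ζ : Euc N → ℝ := fun x => w (‖x‖ ^ 2) * f (Phi N Ω φ x) ^ 2 with hζd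
  have cζ : ContinuousOn ζ S := by
    refine ContinuousOn.mul ?_ ?_
    · exact (cw.continuous.comp (by fun_prop : Continuous fun x : Euc N => ‖x‖ ^ 2)).continuousOn
    · exact (cf.comp_continuousOn ((Phi_contDiffOn hphi).continuousOn.mono hSC)).pow 2
  have ζz : ∀ x ∉ S, ζ x = 0 := by
    intro x hx
    by_cases hw : w (‖x‖ ^ 2) = 0
    · simp [hζd, hw]
    · obtain ⟨h1, h2⟩ := ws _ hw
      have := (fz _ (Phi_lt_of_notMem_trunc hε hx (le_of_sq_le_sq h1 (norm_nonneg _))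
        (le_of_sq_le_sq h2 hb0.le)).le).1
      simp [hζd, this]
  have hl : ContDiffOn ℝ 2 (fun z => log (u z)) U :=
    hu.1.log fun x hx => (hu.2.2.1 x hx).ne'
  have cD : ContDiffOn ℝ 1 (fun y => fderiv ℝ (fun z => log (u z)) y y) U :=
    contDiffOn_euler hU hl (by norm_num)
  -- rescaled weights
  set W : ℝ → ℝ → ℝ := fun t s => exp (-(N * t)) * w (exp (-t) ^ 2 * s) with hW
  have hpt : ∀ (t : ℝ) (x : Euc N), w (‖exp (-t) • x‖ ^ 2) = w (exp (-t) ^ 2 * ‖x‖ ^ 2) := by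
    intro t x
    rw [norm_smul, mul_pow, Real.norm_of_nonneg (exp_pos _).le]
  have sc : ∀ (t : ℝ) (G : Euc N → ℝ), ∫ x, ζ x * G (exp t • x) =
      ∫ x, W t (‖x‖ ^ 2) * f (Phi N Ω φ x) ^ 2 * G x := by
    intro t G
    rw [integral_scale]
    congr 1
    ext x
    simp only [hζd, hW, hpt, Phi_smul (exp_pos (-t))]
    ring
  have sl : ∀ t : ℝ, 1 ≤ t → _ := fun t ht =>
    have et : 1 ≤ exp t := one_le_exp (by linarith)
    slice (w := W t) (a := a * exp t) (b := b * exp t) (M := exp (-(N * t)) * M)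
      hN hΩ hphi hα hρ hu (by nlinarith) (by nlinarith) hε (by positivity)
      (contDiff_const.mul (cw.comp (contDiff_const.mul contDiff_id)))
      (fun s => mul_nonneg (exp_pos _).le (w0 _))
      (fun s => mul_le_mul_of_nonneg_left (wM _) (exp_pos _).le)
      (by
        intro s hs
        obtain ⟨h1, h2⟩ := ws _ (right_ne_zero_of_mul hs)
        have e1 : exp (-t) ^ 2 * exp t ^ 2 = 1 := by
          rw [← mul_pow, ← exp_add]; simp
        have e2 : 0 < exp t ^ 2 := by positivity
        have h3 := mul_le_mul_of_nonneg_right h1 e2.le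
        have h4 := mul_le_mul_of_nonneg_right h2 e2.le
        have e3 : exp (-t) ^ 2 * s * exp t ^ 2 = s := by linear_combination s * e1
        rw [e3] at h3 h4
        rw [mul_pow, mul_pow]
        exact ⟨h3, h4⟩)
      cg df dh fz f1 (by
        have := sc t (fun _ => 1)
        simp only [mul_one] at this
        rw [← this]
        exact hint)
  have hlamt : ∀ t : ℝ, ∫ x, W t (‖x‖ ^ 2) * h (Phi N Ω φ x) * Phi N Ω φ x =
      ∫ x, w (‖x‖ ^ 2) * h (Phi N Ω φ x) * Phi N Ω φ x := by
    intro t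
    have := integral_scale (fun x => w (‖x‖ ^ 2) * h (Phi N Ω φ x)) (Phi N Ω φ) t
    simp only [Phi_smul (exp_pos _), hpt] at this
    rw [this]
    congr 1
    ext x
    simp only [hW]
    ring
  have rp : ∀ (c t : ℝ), 0 < c → (c * exp t) ^ (-α) / (exp (-(N * t)) * M) =
      c ^ (-α) / M * exp (((N : ℝ) - α) * t) := by
    intro c t hc
    rw [mul_rpow hc.le (exp_pos t).le, ← exp_mul, exp_neg ((N : ℝ) * t),
      show ((N : ℝ) - α) * t = t * (-α) + N * t by ring, exp_add]
    field_simp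
  refine ode_contra (y := fun t => ∫ x, ζ x * log (u (exp t • x)))
    (z := fun t => ∫ x, ζ x * fderiv ℝ (fun z => log (u z)) (exp t • x) (exp t • x))
    (z' := fun t => ∫ x, ζ x * fderiv ℝ (fun y => fderiv ℝ (fun z => log (u z)) y y)
      (exp t • x) (exp t • x)) (k := k) (σ := σ) (C0 := (2 * b) ^ (-α) / M * a ^ 2)
    (β := β) (θ := θ) hσ (by positivity) ?_ ?_ ?_ hβ ?_
  · intro t ht
    exact hasDerivAt_scale hU hS hSU (hl.of_le (by norm_num)) cζ ζz (by linarith)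
  · intro t ht
    exact hasDerivAt_scale hU hS hSU cD cζ ζz (by linarith)
  · intro t ht
    have h1 := (sl t ht).1
    rw [← sc t (fun x => log (u x)), ← sc t (fun x => fderiv ℝ (fun z => log (u z)) x x),
      ← sc t (fun x => fderiv ℝ (fun y => fderiv ℝ (fun z => log (u z)) y y) x x), hlamt t,
      show 2 * (b * exp t) = (2 * b) * exp t by ring, rp (2 * b) t (by linarith)] at h1
    set yy := ∫ x, ζ x * log (u (exp t • x))
    set zz := ∫ x, ζ x * fderiv ℝ (fun z => log (u z)) (exp t • x) (exp t • x)
    have e : (2 * b) ^ (-α) / M * exp (((N : ℝ) - α) * t) * (a * exp t) ^ 2 * exp (θ * yy) =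
        (2 * b) ^ (-α) / M * a ^ 2 * exp (β * t + θ * yy) := by
      have e1 : β * t + θ * yy = ((N : ℝ) - α) * t + (t + t) + θ * yy := by rw [hβd]; ring
      rw [e1, exp_add, exp_add, exp_add t t]
      ring
    rw [e] at h1
    have e2 : ((N : ℝ) - 2) = 2 * k := by rw [hk]; ring
    rw [e2] at h1
    nlinarith
  · rcases le_or_gt 0 θ with h0 | h0
    · exact Or.inl ⟨h0, hθσ⟩
    · refine Or.inr ⟨h0, ?_⟩
      obtain ⟨x0, hx0⟩ : U.Nonempty := coneGT_nonempty hΩ hρ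
      set F := (rieszConv N α ρ Ω (fun y => u y ^ p) x0).toReal with hF
      set c := ‖x0‖ + b with hc
      have hc0 : 0 < c := by positivity
      have hcp : 0 < c ^ (-α) / M := by positivity
      refine ⟨F / (c ^ (-α) / M) / p, fun t ht => ?_⟩
      have et : 1 ≤ exp t := one_le_exp (by linarith)
      have h1 := (sl t ht).2 x0 hx0 (c * exp t) (by
        rw [hc]; nlinarith [norm_nonneg x0])
      rw [← sc t (fun x => log (u x)), rp c t hc0] at h1
      set yy := ∫ x, ζ x * log (u (exp t • x))
      have h2 : 1 ≤ exp (((N : ℝ) - α) * t) :=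
        one_le_exp (mul_nonneg (by linarith) (by linarith))
      have h3 : c ^ (-α) / M * exp (p * yy) ≤ F := by
        refine le_trans ?_ h1
        exact mul_le_mul_of_nonneg_right (le_mul_of_one_le_right hcp.le h2) (exp_pos _).le
      have h4 : exp (p * yy) ≤ F / (c ^ (-α) / M) := by
        rw [le_div_iff₀ hcp]; linarith
      rw [le_div_iff₀ hp]
      linarith [add_one_le_exp (p * yy)]
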